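/- Let L be an even positive definite lattice of rank n, k ∈ ℤ, t ∈ ℚ with t > 0, D an even divisor of 24 with D < 24, Q = 24/D > 1, and let φ ∈ J_{k,L;t}(v_η^D × ν) be a holomorphic Jacobi form (ν trivial if Q is odd). Fix μ ∈ (ℤ/Qℤ)^* and choose σ_a ∈ SL₂(ℤ) with σ_a ≡ (a^{−1},0;0,a) mod Q for a coprime to Q. Write the Fourier expansion of φ as φ(τ,𝔷) = Σ_{ñ ≥ 0, ñ ≡ 1 mod Q, l ∈ (1/2)L^∨} f̃(ñ,l)·exp(2πi(ñτ/Q + (l,𝔷))). Then the lifting Lift_μ(φ)(τ,𝔷,ω) := Σ_{m ≥ 1, m ≡ μ mod Q} m^{−1} Σ_{ad=m, a>0} Σ_{b mod d} a^k v_η^D(σ_a) φ((aτ+bQ)/d, a𝔷) exp(2πi(m/Q)ω) has on H(L(Qt)) the Fourier expansion Lift_μ(φ)(τ,𝔷,ω) = Σ_{n,m ≥ 1, n ≡ m ≡ μ mod Q, l ∈ (1/2)L^∨} ( Σ_{a ≥ 1, a|n, a|m, l/a ∈ (1/2)L^∨} a^{k−1} v_η^D(σ_a) f̃(nm/a²,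 l/a) ) · exp(2πi(nτ/Q + (l,𝔷) + mω/Q)), where each coefficient vanishes unless 2nmt/Q − (l,l) ≥ 0. In particular Lift_μ(φ) is symmetric in the two modular variables: Lift_μ(φ)(τ,𝔷,ω) = Lift_μ(φ)(ω,𝔷,τ) for all (τ,𝔷,ω) ∈ H(L(Qt)). -/

import Mathlib

open Complex Matrix
open scoped Real BigOperators Classical

noncomputable section

abbrev SL2Z := Matrix.SpecialLinearGroup (Fin 2) ℤ

/-- The integral bilinear form attached to a Gram matrix `S`. -/
def bilinZ {ι : Type*} [Fintype ι] (S : Matrix ι ι ℤ) (x y : ι → ℤ) : ℤ :=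
  ∑ i, ∑ j, x i * S i j * y j

def bilinQ {ι : Type*} [Fintype ι] (S : Matrix ι ι ℤ) (x y : ι → ℚ) : ℚ :=
  ∑ i, ∑ j, x i * (S i j : ℚ) * y j

def bilinR {ι : Type*} [Fintype ι] (S : Matrix ι ι ℤ) (x y : ι → ℝ) : ℝ :=
  ∑ i, ∑ j, x i * (S i j : ℝ) * y j

def bilinC {ι : Type*} [Fintype ι] (S : Matrix ι ι ℤ) (x y : ι → ℂ) : ℂ :=
  ∑ i, ∑ j, x i * (S i j : ℂ) * y j

/-- `S` is the Gram matrix of an even positive definite lattice. -/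
structure IsEvenPosDef {ι : Type*} [Fintype ι] (S : Matrix ι ι ℤ) : Prop where
  symm : S.IsSymm
  posdef : ∀ x : ι → ℚ, x ≠ 0 → 0 < bilinQ S x x
  even_diag : ∀ i, (2 : ℤ) ∣ S i i

/-- `l ∈ (1/2) L^∨`, written in lattice coordinates:  `2(l,x) ∈ ℤ` for every lattice vector. -/
def InHalfDual {ι : Type*} [Fintype ι] (S : Matrix ι ι ℤ) (l : ι → ℚ) : Prop :=
  ∀ x : ι → ℤ, ∃ m : ℤ, 2 * bilinQ S l (fun i => (x i : ℚ)) = m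

/-- `φ` is a holomorphic Jacobi form of weight `k` and index `t` for the lattice `(ℤ^ι, S)`
with `SL₂(ℤ)`-character (multiplier system) `χ`, Heisenberg character `ν`,
and Fourier coefficients `f`. -/
structure IsJacobiForm {ι : Type*} [Fintype ι] (S : Matrix ι ι ℤ) (k t : ℚ)
    (χ : SL2Z → ℂ) (ν : (ι → ℤ) → (ι → ℤ) → ℂ)
    (f : ℚ × (ι → ℚ) → ℂ) (φ : ℂ → (ι → ℂ) → ℂ) : Prop where
  holo : DifferentiableOn ℂ (fun p : ℂ × (ι → ℂ) => φ p.1 p.2) {p | 0 < p.1.im}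
  modular : ∀ A : SL2Z, ∀ τ : ℂ, 0 < τ.im → ∀ z : ι → ℂ,
    φ (((A.1 0 0 : ℂ) * τ + (A.1 0 1 : ℂ)) / ((A.1 1 0 : ℂ) * τ + (A.1 1 1 : ℂ)))
        (fun i => z i / ((A.1 1 0 : ℂ) * τ + (A.1 1 1 : ℂ)))
      = χ A * ((A.1 1 0 : ℂ) * τ + (A.1 1 1 : ℂ)) ^ (k : ℂ)
        * Complex.exp ((π : ℂ) * I * (t : ℂ) * (A.1 1 0 : ℂ) * bilinC S z z
            / ((A.1 1 0 : ℂ) * τ + (A.1 1 1 : ℂ)))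
        * φ τ z
  elliptic : ∀ x y : ι → ℤ, ∀ τ : ℂ, 0 < τ.im → ∀ z : ι → ℂ,
    φ τ (fun i => z i + (x i : ℂ) * τ + (y i : ℂ))
      = ν x y * Complex.exp (-((π : ℂ) * I * (t : ℂ))
            * ((bilinZ S x x : ℂ) * τ + 2 * bilinC S (fun i => (x i : ℂ)) z))
        * φ τ z
  support : ∀ p : ℚ × (ι → ℚ), f p ≠ 0 →
    0 ≤ p.1 ∧ InHalfDual S p.2 ∧ 0 ≤ 2 * p.1 * t - bilinQ S p.2 p.2
  expansion : ∀ τ : ℂ, 0 < τ.im → ∀ z : ι → ℂ,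
    HasSum (fun p : ℚ × (ι → ℚ) =>
        f p * Complex.exp (2 * (π : ℂ) * I *
          ((p.1 : ℂ) * τ + bilinC S (fun i => (p.2 i : ℂ)) z))) (φ τ z)

/-- The Fourier coefficients `f` are supported on indices of positive hyperbolic norm
(cusp form condition). -/
def IsCuspSupport {ι : Type*} [Fintype ι] (S : Matrix ι ι ℤ) (t : ℚ)
    (f : ℚ × (ι → ℚ) → ℂ) : Prop :=
  ∀ p : ℚ × (ι → ℚ), f p ≠ 0 → 0 < 2 * p.1 * t - bilinQ S p.2 p.2

/-- `c` is a root of unity. -/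
def HasFiniteOrder (c : ℂ) : Prop := ∃ N : ℕ, 0 < N ∧ c ^ N = 1

/-- The quadratic character mod 4. -/
def chi4 (n : ℤ) : ℂ := if n % 4 = 1 then 1 else if n % 4 = 3 then -1 else 0

/-- The classical Jacobi theta-series of characteristic `(1/2,1/2)`. -/
def jtheta (τ z : ℂ) : ℂ :=
  ∑' n : ℤ, chi4 n *
    Complex.exp (2 * (π : ℂ) * I * (((n : ℂ) ^ 2 * τ) / 8 + (n : ℂ) * z / 2))

/-- The Dedekind eta function. -/
def dedekindEta (τ : ℂ) : ℂ :=
  Complex.exp ((π : ℂ) * I * τ / 12) *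
    ∏' n : ℕ, (1 - Complex.exp (2 * (π : ℂ) * I * ((n : ℂ) + 1) * τ))

/-- Congruence condition `Am·(1,0;0,m) ≡ (1,0;0,m)·A  (mod Q)`. -/
def CongrCond (Q m : ℕ) (A Am : SL2Z) : Prop :=
  ∀ i j, (Am.1 * !![(1 : ℤ), 0; 0, (m : ℤ)]) i j
      ≡ (!![(1 : ℤ), 0; 0, (m : ℤ)] * A.1) i j [ZMOD (Q : ℤ)]

/-- `σ_a ≡ (a⁻¹, 0; 0, a) (mod Q)`. -/
def SigmaCond (Q : ℕ) (a : ℕ) (σa : SL2Z) : Prop :=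
  ∃ a' : ℤ, (a : ℤ) * a' ≡ 1 [ZMOD (Q : ℤ)] ∧
    σa.1 0 0 ≡ a' [ZMOD (Q : ℤ)] ∧ σa.1 0 1 ≡ 0 [ZMOD (Q : ℤ)] ∧
    σa.1 1 0 ≡ 0 [ZMOD (Q : ℤ)] ∧ σa.1 1 1 ≡ (a : ℤ) [ZMOD (Q : ℤ)]

/-- The `m`-th Hecke translate `(φ|_{k,t} T_-^{(Q)}(m))(τ,𝔷)
    = ∑_{ad=m, a>0} ∑_{b mod d} a^k v_η^D(σ_a) φ((aτ+bQ)/d, a𝔷)`. -/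
def heckeSum {ι : Type*} [Fintype ι] (φ : ℂ → (ι → ℂ) → ℂ) (vη : SL2Z → ℂ)
    (σ : ℕ → SL2Z) (k : ℤ) (Q m : ℕ) (τ : ℂ) (z : ι → ℂ) : ℂ :=
  ∑ a ∈ m.divisors, ∑ bb ∈ Finset.range (m / a),
    (a : ℂ) ^ k * vη (σ a)
      * φ (((a : ℂ) * τ + (bb : ℂ) * (Q : ℂ)) / ((m / a : ℕ) : ℂ)) (fun i => (a : ℂ) * z i)

/-- The `m`-th term `m⁻¹(φ|_k T_-^{(Q)}(m)) e^{2πi(m/Q)ω}` of the lifting, as a function of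
`(τ, 𝔷, ω)`; it is zero unless `m ≥ 1` and `m ≡ μ (mod Q)`. -/
def liftTerm {ι : Type*} [Fintype ι] (φ : ℂ → (ι → ℂ) → ℂ) (vη : SL2Z → ℂ)
    (σ : ℕ → SL2Z) (k : ℤ) (Q : ℕ) (μ : ℤ) (m : ℕ) (p : ℂ × (ι → ℂ) × ℂ) : ℂ :=
  if 1 ≤ m ∧ (m : ℤ) ≡ μ [ZMOD (Q : ℤ)] then
    (m : ℂ)⁻¹ * heckeSum φ vη σ k Q m p.1 p.2.1
      * Complex.exp (2 * (π : ℂ) * I * ((m : ℂ) / (Q : ℂ)) * p.2.2)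
  else 0

/-- The tube domain `H(L(N))` of the even lattice `L(N)`, `N = Qt`. -/
def tubeDom {ι : Type*} [Fintype ι] (S : Matrix ι ι ℤ) (N : ℚ) : Set (ℂ × (ι → ℂ) × ℂ) :=
  {p | 0 < p.1.im ∧ 0 < p.2.2.im ∧
    (N : ℝ) * bilinR S (fun i => (p.2.1 i).im) (fun i => (p.2.1 i).im)
      < 2 * p.1.im * p.2.2.im}

/-- The lifting `Lift_μ(φ)` as the sum of its Fourier–Jacobi series. -/
def liftFun {ι : Type*} [Fintype ι] (φ : ℂ → (ι → ℂ) → ℂ) (vη : SL2Z → ℂ)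
    (σ : ℕ → SL2Z) (k : ℤ) (Q : ℕ) (μ : ℤ) (p : ℂ × (ι → ℂ) × ℂ) : ℂ :=
  ∑' m : ℕ, liftTerm φ vη σ k Q μ m p

/-- The Fourier coefficient of `Lift_μ(φ)` at `(n, l, m)`:
`∑_{a | (n,l,m)} a^{k-1} v_η^D(σ_a) f̃(nm/a², l/a)`, written in terms of the Fourier
coefficients `f` of `φ` (whose exponents are `ñ/Q` with `ñ ≡ 1 (mod Q)`). -/
def liftCoeff {ι : Type*} [Fintype ι] (S : Matrix ι ι ℤ) (f : ℚ × (ι → ℚ) → ℂ)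
    (vη : SL2Z → ℂ) (σ : ℕ → SL2Z) (k : ℤ) (Q : ℕ) (μ : ℤ)
    (q : ℤ × (ι → ℚ) × ℤ) : ℂ :=
  if 1 ≤ q.1 ∧ 1 ≤ q.2.2 ∧ q.1 ≡ μ [ZMOD (Q : ℤ)] ∧ q.2.2 ≡ μ [ZMOD (Q : ℤ)] then
    ∑ a ∈ (Int.gcd q.1 q.2.2).divisors,
      if InHalfDual S (fun i => q.2.1 i / (a : ℚ)) then
        (a : ℂ) ^ (k - 1) * vη (σ a)
          * f (((q.1 * q.2.2 : ℤ) : ℚ) / ((a : ℚ) ^ 2 * (Q : ℚ)), fun i => q.2.1 i / (a : ℚ))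
      else 0
  else 0

/-
Unitarity of the multiplier systems makes the Fourier coefficients of `φ` grow at most
polynomially in `ñ`, so on the tube domain the quadruple series over `(a, d, n, l)` with terms
`a^(k-1) χ(σ_a) f̃(nd, l) exp(2πi a(nτ/Q + (l,𝔷) + dω/Q))`, `ad ≡ μ mod Q`, converges absolutely.
The average over `b mod d` in the Hecke translate keeps exactly the exponents divisible by `d`, so
grouping this series by `ad` gives the Fourier–Jacobi expansion. Since `f̃(nd, l) ≠ 0` forces
`nd ≡ 1 mod Q`, and a unit modulo a divisor of `24` is its own inverse, `an ≡ ad mod Q`; hence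
grouping by `(an, al, ad)` gives the Fourier expansion with the stated coefficients. These are
symmetric under exchanging `n` and `m`, and so is the lifting.
-/

local notation "𝐞(" w ")" => Complex.exp (2 * (π : ℂ) * I * w)

section Forms

variable {ι : Type*} [Fintype ι] {S : Matrix ι ι ℤ}

lemma bilinR_eq_toBilin' (S : Matrix ι ι ℤ) (x y : ι → ℝ) :
    bilinR S x y = Matrix.toBilin' (S.map (Int.cast : ℤ → ℝ)) x y := by
  simp only [bilinR, Matrix.toBilin'_apply, Matrix.map_apply]

lemma bilinQ_cast (S : Matrix ι ι ℤ) (x y : ι → ℚ) :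
    ((bilinQ S x y : ℚ) : ℝ) = bilinR S (fun i => (x i : ℝ)) (fun i => (y i : ℝ)) := by
  simp [bilinQ, bilinR]

lemma bilinZ_cast (S : Matrix ι ι ℤ) (x y : ι → ℤ) :
    ((bilinZ S x y : ℤ) : ℝ) = bilinR S (fun i => (x i : ℝ)) (fun i => (y i : ℝ)) := by
  simp [bilinZ, bilinR]

lemma bilinC_ofReal (S : Matrix ι ι ℤ) (x y : ι → ℝ) :
    bilinC S (fun i => (x i : ℂ)) (fun i => (y i : ℂ)) = ((bilinR S x y : ℝ) : ℂ) := by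
  simp [bilinC, bilinR]

lemma bilinC_smul_left (S : Matrix ι ι ℤ) (c : ℂ) (x y : ι → ℂ) :
    bilinC S (fun i => c * x i) y = c * bilinC S x y := by
  simp only [bilinC, Finset.mul_sum, mul_assoc]

lemma bilinC_smul_right (S : Matrix ι ι ℤ) (c : ℂ) (x y : ι → ℂ) :
    bilinC S x (fun i => c * y i) = c * bilinC S x y := by
  simp only [bilinC, Finset.mul_sum, mul_left_comm c, mul_assoc]

lemma bilinC_ofReal_im (S : Matrix ι ι ℤ) (l : ι → ℝ) (z : ι → ℂ) :
    (bilinC S (fun i => (l i : ℂ)) z).im = bilinR S l (fun i => (z i).im) := by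
  simp only [bilinC, bilinR, Complex.im_sum]
  refine Finset.sum_congr rfl fun i _ => Finset.sum_congr rfl fun j _ => ?_
  rw [show (l i : ℂ) * (S i j : ℂ) = ((l i * (S i j : ℝ) : ℝ) : ℂ) by push_cast; rfl,
    Complex.im_ofReal_mul]

lemma bilinC_ratCast_im (S : Matrix ι ι ℤ) (l : ι → ℚ) (z : ι → ℂ) :
    (bilinC S (fun i => (l i : ℂ)) z).im
      = bilinR S (fun i => (l i : ℝ)) (fun i => (z i).im) := by
  simp [← bilinC_ofReal_im]

lemma bilinC_intCast_im (S : Matrix ι ι ℤ) (x : ι → ℤ) (z : ι → ℂ) :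
    (bilinC S (fun i => (x i : ℂ)) z).im
      = bilinR S (fun i => (x i : ℝ)) (fun i => (z i).im) := by
  simp [← bilinC_ofReal_im]

lemma bilinQ_div_self (S : Matrix ι ι ℤ) (l : ι → ℚ) (c : ℚ) :
    bilinQ S (fun i => l i / c) (fun i => l i / c) = bilinQ S l l / c ^ 2 := by
  simp only [bilinQ, Finset.sum_div]
  refine Finset.sum_congr rfl fun i _ => Finset.sum_congr rfl fun j _ => ?_
  ring

lemma bilinR_self_nonneg (hS : IsEvenPosDef S) (x : ι → ℝ) : 0 ≤ bilinR S x x := by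
  have hdense : DenseRange fun (q : ι → ℚ) (i : ι) => ((q i : ℚ) : ℝ) :=
    DenseRange.piMap fun _ : ι => Rat.denseRange_cast (𝕜 := ℝ)
  refine hdense.induction_on (p := fun x => 0 ≤ bilinR S x x) x ?_ fun q => ?_
  · refine isClosed_le continuous_const ?_
    unfold bilinR
    fun_prop
  · rw [← bilinQ_cast]
    rcases eq_or_ne q 0 with rfl | hq
    · simp [bilinQ]
    · exact_mod_cast (hS.posdef q hq).le

lemma bilinR_comm (hS : IsEvenPosDef S) (x y : ι → ℝ) : bilinR S x y = bilinR S y x := by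
  rw [bilinR, Finset.sum_comm]
  refine Finset.sum_congr rfl fun i _ => Finset.sum_congr rfl fun j _ => ?_
  rw [hS.symm.apply i j]
  ring

lemma bilinR_sq_le (hS : IsEvenPosDef S) (x y : ι → ℝ) :
    bilinR S x y ^ 2 ≤ bilinR S x x * bilinR S y y := by
  simp only [bilinR_eq_toBilin']
  refine LinearMap.BilinForm.apply_sq_le_of_symm _ (fun v => ?_) ⟨fun v w => ?_⟩ x y
  · simpa only [bilinR_eq_toBilin'] using bilinR_self_nonneg hS v
  · simpa only [bilinR_eq_toBilin', RingHom.id_apply] using bilinR_comm hS v w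

lemma bilinR_smul_self (S : Matrix ι ι ℤ) (c : ℝ) (x : ι → ℝ) :
    bilinR S (c • x) (c • x) = c ^ 2 * bilinR S x x := by
  simp only [bilinR_eq_toBilin', map_smul, LinearMap.smul_apply, smul_eq_mul]
  ring

lemma bilinR_smul_right (S : Matrix ι ι ℤ) (c : ℝ) (x y : ι → ℝ) :
    bilinR S x (c • y) = c * bilinR S x y := by
  simp only [bilinR_eq_toBilin', map_smul, smul_eq_mul]

lemma bilinR_add_smul_self (hS : IsEvenPosDef S) (x y : ι → ℝ) (c : ℝ) :
    bilinR S (x + c • y) (x + c • y)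
      = bilinR S x x + 2 * c * bilinR S x y + c ^ 2 * bilinR S y y := by
  have hcomm := bilinR_comm hS y x
  simp only [bilinR_eq_toBilin', map_add, map_smul, LinearMap.add_apply, LinearMap.smul_apply,
    smul_eq_mul] at hcomm ⊢
  rw [hcomm]
  ring

/-- Completing the square: `r + (l,x) + t(x,x)/2` is `((l + t x, l + t x) + 2rt - (l,l)) / 2t`. -/
lemma add_bilinR_add_nonneg (hS : IsEvenPosDef S) {r t : ℝ} (ht : 0 < t) {l : ι → ℝ}
    (hl : bilinR S l l ≤ 2 * r * t) (x : ι → ℝ) :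
    0 ≤ r + bilinR S l x + t / 2 * bilinR S x x := by
  have hsq := bilinR_self_nonneg hS (l + t • x)
  rw [bilinR_add_smul_self hS] at hsq
  have : 0 ≤ 2 * t * (r + bilinR S l x + t / 2 * bilinR S x x) := by linarith
  exact nonneg_of_mul_nonneg_right this (by positivity)

/-- The coordinates `(l, eⱼ)` of `l` with respect to the dual basis of `L^∨`; the half-dual lattice
consists of the `l` for which `2 * dualCoord S l` is integral. -/
def dualCoord (S : Matrix ι ι ℤ) (l : ι → ℚ) : ι → ℚ :=
  l ᵥ* S.map (Int.cast : ℤ → ℚ)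

lemma dualCoord_apply (S : Matrix ι ι ℤ) (l : ι → ℚ) (j : ι) :
    dualCoord S l j = ∑ i, l i * S i j := rfl

lemma bilinQ_eq_sum_dualCoord (S : Matrix ι ι ℤ) (l x : ι → ℚ) :
    bilinQ S l x = ∑ j, dualCoord S l j * x j := by
  simp only [bilinQ, dualCoord_apply, Finset.sum_mul]
  exact Finset.sum_comm

lemma bilinR_eq_sum_dualCoord (S : Matrix ι ι ℤ) (l : ι → ℚ) (x : ι → ℝ) :
    bilinR S (fun i => (l i : ℝ)) x = ∑ j, (dualCoord S l j : ℝ) * x j := by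
  simp only [bilinR, dualCoord_apply, Rat.cast_sum, Rat.cast_mul, Rat.cast_intCast,
    Finset.sum_mul]
  exact Finset.sum_comm

lemma dualCoord_injective (hS : IsEvenPosDef S) : Function.Injective (dualCoord S) := by
  intro l l' h
  by_contra hne
  have hzero : dualCoord S (l - l') = 0 := by
    rw [dualCoord, Matrix.sub_vecMul]
    exact sub_eq_zero.2 h
  have hpos := hS.posdef (l - l') (sub_ne_zero.2 hne)
  simp [bilinQ_eq_sum_dualCoord, hzero] at hpos

lemma InHalfDual.two_mul_dualCoord_eq_intCast {l : ι → ℚ} (hl : InHalfDual S l) (j : ι) :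
    ∃ m : ℤ, 2 * dualCoord S l j = m := by
  obtain ⟨m, hm⟩ := hl (Pi.single j 1)
  refine ⟨m, ?_⟩
  rw [← hm, bilinQ_eq_sum_dualCoord]
  simp [Pi.single_apply]

lemma norm_exp_two_pi_I_mul (w : ℂ) : ‖𝐞(w)‖ = Real.exp (-(2 * π * w.im)) := by
  rw [Complex.norm_exp]
  congr 1
  simp [Complex.mul_re, Complex.mul_im]

lemma norm_exp_two_pi_I_mul_ofReal (x : ℝ) : ‖𝐞((x : ℂ))‖ = 1 := by
  simp [norm_exp_two_pi_I_mul]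

lemma norm_fourierMonomial (S : Matrix ι ι ℤ) (r : ℚ) (l : ι → ℚ) (τ : ℂ) (z : ι → ℂ) :
    ‖𝐞((r : ℂ) * τ + bilinC S (fun i => (l i : ℂ)) z)‖
      = Real.exp (-(2 * π * (r * τ.im + bilinR S (fun i => (l i : ℝ)) (fun i => (z i).im)))) := by
  rw [norm_exp_two_pi_I_mul, Complex.add_im, bilinC_ratCast_im,
    show (r : ℂ) * τ = ((r : ℝ) : ℂ) * τ by push_cast; rfl, Complex.im_ofReal_mul]

end Forms

section EtaCharacter

open scoped MatrixGroups

lemma HasFiniteOrder.norm_eq_one {c : ℂ} (hc : HasFiniteOrder c) : ‖c‖ = 1 := by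
  obtain ⟨N, hN, hcN⟩ := hc
  exact norm_eq_one_of_pow_eq_one hcN hN.ne'

lemma coe_sl2_smul (A : SL2Z) (τ : UpperHalfPlane) :
    ((A • τ : UpperHalfPlane) : ℂ)
      = ((A.1 0 0 : ℂ) * τ + (A.1 0 1 : ℂ)) / ((A.1 1 0 : ℂ) * τ + (A.1 1 1 : ℂ)) := by
  rw [UpperHalfPlane.coe_specialLinearGroup_apply]
  simp

lemma dedekindEta_eq_eta (τ : ℂ) : dedekindEta τ = ModularForm.eta τ := by
  simp only [dedekindEta, ModularForm.eta, ModularForm.eta_q_eq_cexp, Function.Periodic.qParam]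
  congr 2
  push_cast
  ring

lemma dedekindEta_smul_pow_twentyFour (A : SL2Z) (τ : UpperHalfPlane) :
    dedekindEta ((A • τ : UpperHalfPlane) : ℂ) ^ 24
      = UpperHalfPlane.denom A τ ^ 12 * dedekindEta τ ^ 24 := by
  simp only [dedekindEta_eq_eta]
  exact_mod_cast SlashInvariantForm.slash_action_eqn'' CuspForm.discriminant
    (Γ := 𝒮ℒ) (γ := (A : GL (Fin 2) ℝ)) ⟨A, rfl⟩ τ

/-- `vη A ^ (24 / D)` is the multiplier of `η ^ 24 = Δ`, which is trivial. -/
lemma hasFiniteOrder_of_eta_multiplier {D : ℕ} (hD2 : Even D) (hD24 : D ∣ 24) {vη : SL2Z → ℂ}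
    (hvη : ∀ A : SL2Z, ∀ τ : ℂ, 0 < τ.im →
      dedekindEta (((A.1 0 0 : ℂ) * τ + (A.1 0 1 : ℂ))
            / ((A.1 1 0 : ℂ) * τ + (A.1 1 1 : ℂ))) ^ D
        = vη A * ((A.1 1 0 : ℂ) * τ + (A.1 1 1 : ℂ)) ^ (D / 2) * dedekindEta τ ^ D)
    (A : SL2Z) : HasFiniteOrder (vη A) := by
  obtain ⟨N, hN⟩ := hD24
  have hD : D = D / 2 * 2 := (Nat.div_mul_cancel hD2.two_dvd).symm
  have hN12 : D / 2 * N = 12 := by grind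
  let τ : UpperHalfPlane := UpperHalfPlane.I
  have h := congrArg (· ^ N) (hvη A τ τ.im_pos)
  rw [← coe_sl2_smul] at h
  simp only [mul_pow, ← pow_mul, ← hN, hN12, dedekindEta_smul_pow_twentyFour] at h
  have hne : UpperHalfPlane.denom A τ ^ 12 * dedekindEta τ ^ 24 ≠ 0 := by
    rw [dedekindEta_eq_eta]
    exact mul_ne_zero (pow_ne_zero _ (UpperHalfPlane.denom_ne_zero A τ))
      (pow_ne_zero _ (ModularForm.eta_ne_zero τ.im_pos))
  refine ⟨N, by grind, mul_right_cancel₀ hne ?_⟩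
  rw [one_mul, ← mul_assoc]
  simpa [ModularGroup.denom_apply] using h.symm

end EtaCharacter

section AlmostPeriodic

open Filter Topology

lemma tendsto_mean_pow_zero {z : ℂ} (hz : z ≠ 1) (hnorm : ‖z‖ = 1) :
    Tendsto (fun N : ℕ => (N : ℂ)⁻¹ * ∑ s ∈ Finset.range N, z ^ s) atTop (𝓝 0) := by
  rw [tendsto_zero_iff_norm_tendsto_zero]
  have hlim : Tendsto (fun N : ℕ => (2 / ‖z - 1‖) * (N : ℝ)⁻¹) atTop (𝓝 0) := by
    simpa using (tendsto_inv_atTop_nhds_zero_nat (𝕜 := ℝ)).const_mul (2 / ‖z - 1‖)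
  refine squeeze_zero (fun _ => norm_nonneg _) (fun N => ?_) hlim
  rw [geom_sum_eq hz, norm_mul, norm_div, norm_inv, Complex.norm_natCast, mul_comm]
  gcongr
  calc ‖z ^ N - 1‖ ≤ ‖z ^ N‖ + ‖(1 : ℂ)‖ := norm_sub_le _ _
    _ = 2 := by rw [norm_pow, hnorm]; norm_num

lemma norm_mean_le {E : Type*} [NormedAddCommGroup E] [NormedSpace ℂ E] {g : ℕ → E} {M : ℝ}
    (hg : ∀ s, ‖g s‖ ≤ M) (N : ℕ) : ‖(N : ℂ)⁻¹ • ∑ s ∈ Finset.range N, g s‖ ≤ M := by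
  have hM : 0 ≤ M := (norm_nonneg _).trans (hg 0)
  have hsum : ‖∑ s ∈ Finset.range N, g s‖ ≤ N * M := by
    simpa using norm_sum_le_of_le (Finset.range N) fun s _ => hg s
  rw [norm_smul, norm_inv, Complex.norm_natCast]
  rcases N.eq_zero_or_pos with rfl | hN
  · simpa using hM
  · rwa [inv_mul_le_iff₀ (by exact_mod_cast hN)]

lemma tendsto_tsum_mul_mean_pow {P : Type*} {c w : P → ℂ} (hc : Summable fun q => ‖c q‖)
    (hw : ∀ q, ‖w q‖ = 1) {p : P} (hp : ∀ q, w q = 1 ↔ q = p) :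
    Tendsto (fun N : ℕ => ∑' q, c q * ((N : ℂ)⁻¹ * ∑ s ∈ Finset.range N, w q ^ s)) atTop
      (𝓝 (c p)) := by
  rw [← tsum_ite_eq p c]
  refine tendsto_tsum_of_dominated_convergence hc (fun q => ?_)
    (Eventually.of_forall fun N q => ?_)
  · split_ifs with hq
    · rw [(hp q).2 hq]
      refine tendsto_const_nhds.congr' ?_
      filter_upwards [eventually_ne_atTop 0] with N hN
      simp [hN]
    · simpa using (tendsto_mean_pow_zero (mt (hp q).1 hq) (hw q)).const_mul (c q)
  · rw [norm_mul]
    refine mul_le_of_le_one_right (norm_nonneg _) (norm_mean_le (fun s => ?_) N)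
    rw [norm_pow, hw, one_pow]

/-- Averaging `w p ^ (-s) * ∑ c q * w q ^ s` over `s` isolates `c p`. -/
lemma norm_coeff_le_of_norm_tsum_pow_le {P : Type*} {c w : P → ℂ} (hc : Summable fun q => ‖c q‖)
    (hw : ∀ q, ‖w q‖ = 1) (hinj : Function.Injective w) {M : ℝ}
    (hM : ∀ s : ℕ, ‖∑' q, c q * w q ^ s‖ ≤ M) (p : P) : ‖c p‖ ≤ M := by
  have hwp : w p ≠ 0 := norm_ne_zero_iff.1 (by simp [hw])
  have hquot : ∀ q, ‖w q / w p‖ = 1 := fun q => by simp [hw]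
  have hlim := tendsto_tsum_mul_mean_pow hc hquot (p := p)
    fun q => by rw [div_eq_one_iff_eq hwp, hinj.eq_iff]
  refine le_of_tendsto hlim.norm (Eventually.of_forall fun N => ?_)
  have hsum (s : ℕ) : Summable fun q => c q * (w q / w p) ^ s :=
    Summable.of_norm (by simpa [hw] using hc)
  have hswap : ∑' q, c q * ((N : ℂ)⁻¹ * ∑ s ∈ Finset.range N, (w q / w p) ^ s)
      = (N : ℂ)⁻¹ • ∑ s ∈ Finset.range N, ∑' q, c q * (w q / w p) ^ s := by
    rw [← Summable.tsum_finsetSum fun s _ => hsum s, smul_eq_mul, ← tsum_mul_left]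
    refine tsum_congr fun q => ?_
    rw [← Finset.mul_sum, mul_left_comm]
  rw [hswap]
  refine norm_mean_le (fun s => ?_) N
  simp_rw [div_pow, ← mul_div_assoc]
  rw [tsum_div_const, norm_div, norm_pow, hw, one_pow, div_one]
  exact hM s

lemma exists_rationally_independent_mod_int (κ : Type*) [Fintype κ] :
    ∃ v : κ → ℝ, ∀ (b : κ → ℚ) (m : ℤ), ∑ j, (b j : ℝ) * v j = m → b = 0 := by
  have hrank : ((Fintype.card (Option κ) : ℕ) : Cardinal) ≤ Module.rank ℚ ℝ := by
    rw [Real.rank_rat_real]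
    exact (Cardinal.natCast_lt_aleph0.trans_le Cardinal.aleph0_le_continuum).le
  obtain ⟨g, hg⟩ := exists_linearIndependent_of_le_rank hrank
  replace hg := hg.comp _ (Fintype.equivFin (Option κ)).injective
  set u : Option κ → ℝ := g ∘ Fintype.equivFin (Option κ)
  have hu : u none ≠ 0 := hg.ne_zero none
  refine ⟨fun j => u (some j) / u none, fun b m h => ?_⟩
  rw [Fintype.linearIndependent_iff] at hg
  have hrel : ∑ o, (o.elim (-m : ℚ) b) • u o = 0 := by
    simp only [← mul_div_assoc, ← Finset.sum_div, div_eq_iff hu] at h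
    simp [Fintype.sum_option, Rat.smul_def, h]
  exact funext fun j => hg _ hrel (some j)

lemma exp_two_pi_I_mul_ofReal_eq_iff {x y : ℝ} :
    𝐞((x : ℂ)) = 𝐞((y : ℂ)) ↔ ∃ m : ℤ, x - y = m := by
  rw [Complex.exp_eq_exp_iff_exists_int]
  refine exists_congr fun m => ?_
  rw [mul_comm (m : ℂ), ← mul_add, mul_right_inj' Complex.two_pi_I_ne_zero, sub_eq_iff_eq_add']
  norm_cast

lemma norm_coeff_le_of_norm_fourierSeries_le {P κ : Type*} [Fintype κ] {ξ : P → κ → ℚ}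
    (hξ : Function.Injective ξ) {c : P → ℂ} (hc : Summable fun p => ‖c p‖) {M : ℝ}
    (hM : ∀ x : κ → ℝ, ‖∑' p, c p * 𝐞(((∑ j, (ξ p j : ℝ) * x j : ℝ) : ℂ))‖ ≤ M) (p : P) :
    ‖c p‖ ≤ M := by
  obtain ⟨v, hv⟩ := exists_rationally_independent_mod_int κ
  let w (p : P) : ℂ := 𝐞(((∑ j, (ξ p j : ℝ) * v j : ℝ) : ℂ))
  have hinj : Function.Injective w := fun p q hpq => by
    obtain ⟨m, hm⟩ := exp_two_pi_I_mul_ofReal_eq_iff.1 hpq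
    refine hξ (sub_eq_zero.1 (hv (ξ p - ξ q) m ?_))
    rw [← hm, ← Finset.sum_sub_distrib]
    simp [sub_mul]
  refine norm_coeff_le_of_norm_tsum_pow_le hc (fun p => norm_exp_two_pi_I_mul_ofReal _) hinj
    (fun s => ?_) p
  convert hM (s • v) using 4 with p
  rw [← Complex.exp_nat_mul]
  congr 1
  simp only [Pi.smul_apply, nsmul_eq_mul, mul_left_comm _ (s : ℝ), ← Finset.mul_sum]
  rw [Complex.ofReal_mul, Complex.ofReal_natCast, mul_left_comm]

end AlmostPeriodic

section Growth

variable {ι : Type*} [Fintype ι] {S : Matrix ι ι ℤ}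

/-- The term of index `p = (r, l)` of the Fourier series with coefficients `f`, as in
`IsJacobiForm.expansion`. -/
def fourierTerm (S : Matrix ι ι ℤ) (f : ℚ × (ι → ℚ) → ℂ) (τ : ℂ) (z : ι → ℂ)
    (p : ℚ × (ι → ℚ)) : ℂ :=
  f p * 𝐞((p.1 : ℂ) * τ + bilinC S (fun i => (p.2 i : ℂ)) z)

lemma norm_fourierTerm (S : Matrix ι ι ℤ) (f : ℚ × (ι → ℚ) → ℂ) (τ : ℂ) (z : ι → ℂ)
    (p : ℚ × (ι → ℚ)) :
    ‖fourierTerm S f τ z p‖ = ‖f p‖ * Real.exp (-(2 * π *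
      (p.1 * τ.im + bilinR S (fun i => (p.2 i : ℝ)) (fun i => (z i).im)))) := by
  rw [fourierTerm, norm_mul, norm_fourierMonomial]

/-- The absolute value of `φ` normalised by the Gaussian factor of index `t`: it is invariant
under lattice translations of `z` and has the weight of `φ` under `SL₂(ℤ)`. -/
def jacobiSize (S : Matrix ι ι ℤ) (t : ℚ) (φ : ℂ → (ι → ℂ) → ℂ) (τ : ℂ) (z : ι → ℂ) : ℝ :=
  Real.exp (-(π * t * (bilinR S (fun i => (z i).im) (fun i => (z i).im) / τ.im))) * ‖φ τ z‖

lemma jacobiSize_ofReal (S : Matrix ι ι ℤ) (t : ℚ) (φ : ℂ → (ι → ℂ) → ℂ) (τ : ℂ) (x : ι → ℝ) :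
    jacobiSize S t φ τ (fun i => (x i : ℂ)) = ‖φ τ fun i => (x i : ℂ)‖ := by
  simp [jacobiSize, bilinR]

lemma jacobiSize_add_lattice (hS : IsEvenPosDef S) {k t : ℚ} {χ : SL2Z → ℂ}
    {ν : (ι → ℤ) → (ι → ℤ) → ℂ} {f : ℚ × (ι → ℚ) → ℂ} {φ : ℂ → (ι → ℂ) → ℂ}
    (hφ : IsJacobiForm S k t χ ν f φ) {x y : ι → ℤ} (hν : ‖ν x y‖ = 1) {τ : ℂ} (hτ : 0 < τ.im)
    (z : ι → ℂ) :
    jacobiSize S t φ τ (fun i => z i + (x i : ℂ) * τ + (y i : ℂ)) = jacobiSize S t φ τ z := by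
  have him : (fun i => (z i + (x i : ℂ) * τ + (y i : ℂ)).im)
      = (fun i => (z i).im) + τ.im • fun i => (x i : ℝ) := by
    funext i
    simp [mul_comm]
  have hre : (-((π : ℂ) * I * (t : ℂ))
        * ((bilinZ S x x : ℂ) * τ + 2 * bilinC S (fun i => (x i : ℂ)) z)).re
      = π * t * (bilinR S (fun i => (x i : ℝ)) (fun i => (x i : ℝ)) * τ.im
          + 2 * bilinR S (fun i => (x i : ℝ)) (fun i => (z i).im)) := by
    rw [← bilinZ_cast, ← bilinC_intCast_im]
    simp
  rw [jacobiSize, jacobiSize, hφ.elliptic x y τ hτ z, norm_mul, norm_mul, hν, one_mul,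
    Complex.norm_exp, hre, him, bilinR_add_smul_self hS, ← mul_assoc, ← Real.exp_add,
    bilinR_comm hS (fun i => (x i : ℝ)) fun i => (z i).im]
  congr 2
  field_simp
  ring

lemma bilinC_self_re_im (hS : IsEvenPosDef S) (z : ι → ℂ) :
    bilinC S z z
      = ⟨bilinR S (fun i => (z i).re) (fun i => (z i).re)
          - bilinR S (fun i => (z i).im) (fun i => (z i).im),
        2 * bilinR S (fun i => (z i).re) (fun i => (z i).im)⟩ := by
  rw [two_mul]
  nth_rewrite 3 [bilinR_comm hS]
  simp only [bilinR, bilinC, ← Finset.sum_add_distrib, ← Finset.sum_sub_distrib]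
  apply Complex.ext <;> simp only [Complex.re_sum, Complex.im_sum] <;>
  refine Finset.sum_congr rfl fun i _ => Finset.sum_congr rfl fun j _ => ?_ <;>
  simp only [mul_re, mul_im, intCast_re, intCast_im, mul_zero, sub_zero, zero_add]
  ring

/-- For `j = cτ + d` the Gaussian factors at `(τ, z)` and `(Aτ, z / j)` differ by the exponential
factor of the modular transformation law. -/
lemma bilinR_im_div_self (hS : IsEvenPosDef S) {τ : ℂ} (hτ : 0 < τ.im) {c d : ℝ}
    (hj : (c : ℂ) * τ + d ≠ 0) (z : ι → ℂ) :
    bilinR S (fun i => (z i / (c * τ + d)).im) (fun i => (z i / (c * τ + d)).im)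
        / (τ.im / ‖(c : ℂ) * τ + d‖ ^ 2)
      + (c * bilinC S z z / (c * τ + d)).im
      = bilinR S (fun i => (z i).im) (fun i => (z i).im) / τ.im := by
  have hn : Complex.normSq (c * τ + d) ≠ 0 := by simpa using hj
  have him : (fun i => (z i / (c * τ + d)).im)
      = (Complex.normSq (c * τ + d))⁻¹ •
        ((c * τ.re + d) • (fun i => (z i).im) + (-(c * τ.im)) • fun i => (z i).re) := by
    funext i
    simp only [div_im, add_re, mul_re, ofReal_re, ofReal_im, zero_mul, sub_zero, add_im, mul_im,
      add_zero, neg_smul, Pi.smul_apply, Pi.add_apply, smul_eq_mul, Pi.neg_apply]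
    ring
  have hnorm : Complex.normSq (c * τ + d) = (c * τ.re + d) ^ 2 + (c * τ.im) ^ 2 := by
    simp only [normSq_apply, add_re, mul_re, ofReal_re, ofReal_im, zero_mul, sub_zero, add_im,
      mul_im, add_zero]
    ring
  rw [him, bilinR_smul_self, bilinR_add_smul_self hS, bilinR_smul_self, bilinR_comm hS (_ • _),
    bilinR_smul_right, bilinC_self_re_im hS, Complex.div_im, ← Complex.normSq_eq_norm_sq]
  simp only [inv_pow, mul_neg, neg_mul, even_two, Even.neg_pow, mul_im, ofReal_re, ofReal_im,
    zero_mul, add_zero, add_re, mul_re, sub_zero, add_im]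
  field_simp
  rw [hnorm]
  ring

end Growth

section CoefficientBound

variable {ι : Type*} [Fintype ι] {S : Matrix ι ι ℤ}

lemma exp_sum_mul_le_sum_exp (a x : ι → ℝ) (h₀ : ∀ i, 0 ≤ x i) (h₁ : ∀ i, x i ≤ 1) :
    Real.exp (∑ i, a i * x i) ≤ ∑ s : Finset ι, Real.exp (∑ i ∈ s, a i) := by
  have hfactor (i : ι) : Real.exp (a i * x i) ≤ 1 + Real.exp (a i) := by
    rcases le_total (a i) 0 with ha | ha
    · linarith [Real.exp_le_one_iff.2 (mul_nonpos_of_nonpos_of_nonneg ha (h₀ i)),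
        Real.exp_pos (a i)]
    · linarith [Real.exp_le_exp.2 (mul_le_of_le_one_right ha (h₁ i))]
  calc Real.exp (∑ i, a i * x i) = ∏ i, Real.exp (a i * x i) := Real.exp_sum _ _
    _ ≤ ∏ i, (1 + Real.exp (a i)) :=
        Finset.prod_le_prod (fun i _ => (Real.exp_pos _).le) fun i _ => hfactor i
    _ = ∑ s : Finset ι, Real.exp (∑ i ∈ s, a i) := by
        rw [Finset.prod_one_add, Finset.powerset_univ]
        exact Finset.sum_congr rfl fun s _ => (Real.exp_sum s a).symm

lemma IsJacobiForm.bilinR_le {k t : ℚ} {χ : SL2Z → ℂ} {ν : (ι → ℤ) → (ι → ℤ) → ℂ}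
    {f : ℚ × (ι → ℚ) → ℂ} {φ : ℂ → (ι → ℂ) → ℂ} (hφ : IsJacobiForm S k t χ ν f φ)
    {p : ℚ × (ι → ℚ)} (hp : f p ≠ 0) :
    bilinR S (fun i => (p.2 i : ℝ)) (fun i => (p.2 i : ℝ)) ≤ 2 * p.1 * t := by
  rw [← bilinQ_cast]
  exact_mod_cast sub_nonneg.1 (hφ.support p hp).2.2

/-- On the cell `Im z ∈ (Im τ) [0, 1]^ι` the exponent is affine in `z`, hence dominated by its
values at the vertices. -/
lemma IsJacobiForm.exp_mul_norm_fourierTerm_le (hS : IsEvenPosDef S) {k t : ℚ} (ht : 0 < t)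
    {χ : SL2Z → ℂ} {ν : (ι → ℤ) → (ι → ℤ) → ℂ} {f : ℚ × (ι → ℚ) → ℂ}
    {φ : ℂ → (ι → ℂ) → ℂ} (hφ : IsJacobiForm S k t χ ν f φ) {τ : ℂ} (hτ : 1 / 2 ≤ τ.im)
    {z : ι → ℂ} {x : ι → ℝ} (hz : (fun i => (z i).im) = τ.im • x) (h₀ : ∀ i, 0 ≤ x i)
    (h₁ : ∀ i, x i ≤ 1) (p : ℚ × (ι → ℚ)) :
    Real.exp (-(π * t * (bilinR S (fun i => (z i).im) (fun i => (z i).im) / τ.im)))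
        * ‖fourierTerm S f τ z p‖
      ≤ ∑ s : Finset ι, ‖fourierTerm S f (I / 2) (fun j => if j ∈ s then I / 2 else 0) p‖ := by
  rcases eq_or_ne (f p) 0 with hp | hp
  · simp [fourierTerm, hp]
  have htR : (0 : ℝ) < t := mod_cast ht
  have hτ0 : τ.im ≠ 0 := by linarith
  have hpos := add_bilinR_add_nonneg hS htR (hφ.bilinR_le hp) x
  have hdrop : (p.1 + bilinR S (fun i => (p.2 i : ℝ)) x) / 2
      ≤ τ.im * (p.1 + bilinR S (fun i => (p.2 i : ℝ)) x + t / 2 * bilinR S x x) := by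
    nlinarith [mul_nonneg htR.le (bilinR_self_nonneg hS x)]
  have hvertex (s : Finset ι) :
      ‖fourierTerm S f (I / 2) (fun j => if j ∈ s then I / 2 else 0) p‖
        = ‖f p‖ * Real.exp (-(π * p.1)) * Real.exp (∑ j ∈ s, -(π * dualCoord S p.2 j)) := by
    rw [norm_fourierTerm, mul_assoc ‖f p‖, ← Real.exp_add, bilinR_eq_sum_dualCoord]
    simp only [apply_ite Complex.im, Complex.div_ofNat_im, Complex.I_im, Complex.zero_im, mul_ite,
      mul_zero, Finset.sum_ite_mem, Finset.univ_inter, Finset.sum_neg_distrib, ← Finset.mul_sum,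
      ← Finset.sum_mul]
    ring_nf
  calc _ = ‖f p‖ * Real.exp (-(2 * π * (τ.im *
          (p.1 + bilinR S (fun i => (p.2 i : ℝ)) x + t / 2 * bilinR S x x)))) := by
        rw [norm_fourierTerm, hz, bilinR_smul_self, bilinR_smul_right, mul_left_comm,
          ← Real.exp_add]
        congr 2
        field_simp
        ring
    _ ≤ ‖f p‖ * Real.exp (-(2 * π * ((p.1 + bilinR S (fun i => (p.2 i : ℝ)) x) / 2))) := by
        gcongr
    _ = ‖f p‖ * Real.exp (-(π * p.1)) * Real.exp (∑ j, -(π * dualCoord S p.2 j) * x j) := by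
        rw [mul_assoc ‖f p‖, ← Real.exp_add, bilinR_eq_sum_dualCoord]
        simp only [neg_mul, mul_assoc, Finset.sum_neg_distrib, ← Finset.mul_sum]
        ring_nf
    _ ≤ _ := by
        simp only [hvertex, ← Finset.mul_sum]
        gcongr
        exact exp_sum_mul_le_sum_exp _ x h₀ h₁

lemma IsJacobiForm.hasSum_fourierTerm {k t : ℚ} {χ : SL2Z → ℂ} {ν : (ι → ℤ) → (ι → ℤ) → ℂ}
    {f : ℚ × (ι → ℚ) → ℂ} {φ : ℂ → (ι → ℂ) → ℂ} (hφ : IsJacobiForm S k t χ ν f φ) {τ : ℂ}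
    (hτ : 0 < τ.im) (z : ι → ℂ) : HasSum (fourierTerm S f τ z) (φ τ z) :=
  hφ.expansion τ hτ z

lemma IsJacobiForm.exists_jacobiSize_le_of_mem_cell (hS : IsEvenPosDef S) {k t : ℚ} (ht : 0 < t)
    {χ : SL2Z → ℂ} {ν : (ι → ℤ) → (ι → ℤ) → ℂ} {f : ℚ × (ι → ℚ) → ℂ}
    {φ : ℂ → (ι → ℂ) → ℂ} (hφ : IsJacobiForm S k t χ ν f φ) :
    ∃ M : ℝ, ∀ (τ : ℂ) (z : ι → ℂ) (x : ι → ℝ), 1 / 2 ≤ τ.im →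
      (fun i => (z i).im) = τ.im • x → (∀ i, 0 ≤ x i) → (∀ i, x i ≤ 1) →
      jacobiSize S t φ τ z ≤ M := by
  refine ⟨∑' p, ∑ s : Finset ι,
    ‖fourierTerm S f (I / 2) (fun j => if j ∈ s then I / 2 else 0) p‖,
    fun τ z x hτ hz h₀ h₁ => ?_⟩
  have hsum := hφ.hasSum_fourierTerm (by linarith : 0 < τ.im) z
  have hvertices : Summable fun p => ∑ s : Finset ι,
      ‖fourierTerm S f (I / 2) (fun j => if j ∈ s then I / 2 else 0) p‖ :=
    summable_sum fun s _ => (hφ.hasSum_fourierTerm (by simp) _).summable.norm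
  rw [jacobiSize, ← hsum.tsum_eq]
  calc _ ≤ Real.exp (-(π * t * (bilinR S (fun i => (z i).im) (fun i => (z i).im) / τ.im)))
          * ∑' p, ‖fourierTerm S f τ z p‖ := by
        gcongr
        exact norm_tsum_le_tsum_norm hsum.summable.norm
    _ ≤ _ := by
        rw [← tsum_mul_left]
        exact (hsum.summable.norm.mul_left _).tsum_le_tsum
          (hφ.exp_mul_norm_fourierTerm_le hS ht hτ hz h₀ h₁) hvertices

lemma IsJacobiForm.exists_jacobiSize_le (hS : IsEvenPosDef S) {k t : ℚ} (ht : 0 < t)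
    {χ : SL2Z → ℂ} {ν : (ι → ℤ) → (ι → ℤ) → ℂ} (hν : ∀ x y, ‖ν x y‖ = 1)
    {f : ℚ × (ι → ℚ) → ℂ} {φ : ℂ → (ι → ℂ) → ℂ} (hφ : IsJacobiForm S k t χ ν f φ) :
    ∃ M : ℝ, ∀ (τ : ℂ) (z : ι → ℂ), 1 / 2 ≤ τ.im → jacobiSize S t φ τ z ≤ M := by
  obtain ⟨M, hM⟩ := hφ.exists_jacobiSize_le_of_mem_cell hS ht
  refine ⟨M, fun τ z hτ => ?_⟩
  have hτ0 : 0 < τ.im := by linarith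
  rw [← jacobiSize_add_lattice hS hφ (hν (fun i => -⌊(z i).im / τ.im⌋) 0) hτ0 z]
  refine hM τ _ (fun i => Int.fract ((z i).im / τ.im)) hτ ?_ (fun i => Int.fract_nonneg _)
    fun i => (Int.fract_lt_one _).le
  funext i
  simp only [Int.cast_neg, neg_mul, add_im, neg_im, Pi.zero_apply, Int.cast_zero, add_zero, mul_im,
    intCast_re, intCast_im, zero_mul, Pi.smul_apply, smul_eq_mul, ← Int.self_sub_floor]
  field_simp
  ring

lemma IsJacobiForm.jacobiSize_smul (hS : IsEvenPosDef S) {k : ℤ} {t : ℚ} {χ : SL2Z → ℂ}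
    {ν : (ι → ℤ) → (ι → ℤ) → ℂ} {f : ℚ × (ι → ℚ) → ℂ} {φ : ℂ → (ι → ℂ) → ℂ}
    (hφ : IsJacobiForm S (k : ℚ) t χ ν f φ) (A : SL2Z) (τ : UpperHalfPlane) (z : ι → ℂ) :
    jacobiSize S t φ (A • τ : UpperHalfPlane) (fun i => z i / UpperHalfPlane.denom A τ)
      = ‖χ A‖ * ‖UpperHalfPlane.denom A τ‖ ^ k * jacobiSize S t φ τ z := by
  have hj : UpperHalfPlane.denom A τ = ((A.1 1 0 : ℝ) : ℂ) * τ + ((A.1 1 1 : ℝ) : ℂ) := by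
    simp [ModularGroup.denom_apply]
  have hj0 := UpperHalfPlane.denom_ne_zero A τ
  have him : (A • τ : UpperHalfPlane).im = τ.im / ‖UpperHalfPlane.denom A τ‖ ^ 2 := by
    rw [ModularGroup.im_smul_eq_div_normSq, Complex.normSq_eq_norm_sq]
  have hmod := hφ.modular A τ τ.im_pos z
  have hgauss := bilinR_im_div_self hS τ.im_pos (hj ▸ hj0) z
  have hre : ((π : ℂ) * I * (t : ℂ) * (A.1 1 0 : ℂ) * bilinC S z z
      / UpperHalfPlane.denom A τ).re
        = -(π * t * (((A.1 1 0 : ℝ) : ℂ) * bilinC S z z / UpperHalfPlane.denom A τ).im) := by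
    rw [show (π : ℂ) * I * (t : ℂ) * (A.1 1 0 : ℂ) * bilinC S z z / UpperHalfPlane.denom A τ
        = ((π * t : ℝ) : ℂ) * (I * (((A.1 1 0 : ℝ) : ℂ) * bilinC S z z
          / UpperHalfPlane.denom A τ)) by push_cast; ring, Complex.re_ofReal_mul, Complex.I_mul_re]
    ring
  rw [← hj, UpperHalfPlane.coe_im] at hgauss
  rw [← coe_sl2_smul, ← ModularGroup.denom_apply, Rat.cast_intCast, Complex.cpow_intCast] at hmod
  rw [jacobiSize, jacobiSize, hmod, UpperHalfPlane.coe_im, UpperHalfPlane.coe_im, him, norm_mul,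
    norm_mul, norm_mul, norm_zpow, Complex.norm_exp, hre, ← hgauss, mul_add, neg_add,
    Real.exp_add]
  ring

lemma im_le_norm_denom {τ : UpperHalfPlane} (hτ : τ.im ≤ 1) (A : SL2Z) :
    τ.im ≤ ‖UpperHalfPlane.denom A τ‖ := by
  rcases eq_or_ne (A.1 1 0) 0 with hc | hc
  · have hd : A.1 1 1 ≠ 0 := by
      intro hd
      have hdet := A.2
      rw [Matrix.det_fin_two, hc, hd] at hdet
      simp at hdet
    rw [ModularGroup.denom_apply, hc, Int.cast_zero, zero_mul, zero_add, Complex.norm_intCast]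
    exact hτ.trans (mod_cast Int.one_le_abs hd)
  · calc τ.im ≤ |(A.1 1 0 : ℝ)| * τ.im :=
          le_mul_of_one_le_left τ.im_pos.le (mod_cast Int.one_le_abs hc)
      _ = |(A.1 1 0 : ℝ) * τ.im| := by rw [abs_mul, abs_of_pos τ.im_pos]
      _ = |(UpperHalfPlane.denom A τ).im| := by simp [ModularGroup.denom_apply]
      _ ≤ _ := Complex.abs_im_le_norm _

lemma pow_natAbs_le_zpow {v r : ℝ} (hv : 0 < v) (hvr : v ≤ r) (hr : r ≤ 1) (k : ℤ) :
    v ^ k.natAbs ≤ r ^ k := by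
  have hr0 : 0 < r := hv.trans_le hvr
  calc v ^ k.natAbs ≤ r ^ k.natAbs := pow_le_pow_left₀ hv.le hvr _
    _ = r ^ |k| := by rw [Int.abs_eq_natAbs, zpow_natCast]
    _ ≤ r ^ k := zpow_le_zpow_right_of_le_one₀ hr0 hr (le_abs_self k)

/-- Moving `τ` to `Im τ ≥ 1 / 2` by a modular transformation with `‖cτ + d‖ ≤ 1` costs only a
power of `Im τ`. -/
lemma IsJacobiForm.exists_norm_ofReal_le (hS : IsEvenPosDef S) {k : ℤ} {t : ℚ} (ht : 0 < t)
    {χ : SL2Z → ℂ} (hχ : ∀ A, ‖χ A‖ = 1) {ν : (ι → ℤ) → (ι → ℤ) → ℂ} (hν : ∀ x y, ‖ν x y‖ = 1)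
    {f : ℚ × (ι → ℚ) → ℂ} {φ : ℂ → (ι → ℂ) → ℂ} (hφ : IsJacobiForm S (k : ℚ) t χ ν f φ) :
    ∃ M : ℝ, ∀ τ : UpperHalfPlane, τ.im ≤ 1 → ∀ x : ι → ℝ,
      ‖φ τ fun i => (x i : ℂ)‖ ≤ M * τ.im⁻¹ ^ k.natAbs := by
  obtain ⟨M, hM⟩ := hφ.exists_jacobiSize_le hS ht hν
  refine ⟨M, fun τ hτ x => ?_⟩
  obtain ⟨A, hAτ, hA⟩ := ModularGroup.exists_one_half_le_im_smul_and_norm_denom_le τ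
  have hsize := hM (A • τ : UpperHalfPlane) (fun i => x i / UpperHalfPlane.denom A τ) hAτ
  rw [hφ.jacobiSize_smul hS, jacobiSize_ofReal, hχ, one_mul] at hsize
  rw [inv_pow, ← div_eq_mul_inv, le_div_iff₀ (pow_pos τ.im_pos _), mul_comm]
  refine (mul_le_mul_of_nonneg_right ?_ (norm_nonneg _)).trans hsize
  exact pow_natAbs_le_zpow τ.im_pos (im_le_norm_denom hτ A) hA k

lemma IsJacobiForm.norm_coeff_mul_exp_le (hS : IsEvenPosDef S) {k t : ℚ}
    {χ : SL2Z → ℂ} {ν : (ι → ℤ) → (ι → ℤ) → ℂ}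
    {f : ℚ × (ι → ℚ) → ℂ} {φ : ℂ → (ι → ℂ) → ℂ} (hφ : IsJacobiForm S k t χ ν f φ)
    {v M : ℝ} (hv : 0 < v) (hM : ∀ (u : ℝ) (x : ι → ℝ), ‖φ (u + v * I) fun i => (x i : ℂ)‖ ≤ M)
    (p : ℚ × (ι → ℚ)) : ‖f p‖ * Real.exp (-(2 * π * (p.1 * v))) ≤ M := by
  let c : ℚ × (ι → ℚ) → ℂ := fourierTerm S f (v * I) 0
  have hvI : 0 < ((v : ℂ) * I).im := by simpa using hv
  have hc : ‖c p‖ = ‖f p‖ * Real.exp (-(2 * π * (p.1 * v))) := by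
    rw [norm_fourierTerm]
    simp [bilinR]
  let ξ : ℚ × (ι → ℚ) → Option ι → ℚ := fun p o => o.elim p.1 (dualCoord S p.2)
  have hξ : Function.Injective ξ := fun p q h =>
    Prod.ext (congrFun h none) (dualCoord_injective hS (funext fun j => congrFun h (some j)))
  rw [← hc]
  refine norm_coeff_le_of_norm_fourierSeries_le hξ
    (hφ.hasSum_fourierTerm hvI _).summable.norm (fun x => ?_) p
  have hval := hφ.hasSum_fourierTerm (τ := x none + v * I) (by simpa using hv)
    fun i => (x (some i) : ℂ)
  convert hM (x none) fun i => x (some i) using 2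
  rw [← hval.tsum_eq]
  refine tsum_congr fun p => ?_
  have hbil : bilinC S (fun i => (p.2 i : ℂ)) (fun i => (x (some i) : ℂ))
      = ((∑ j, (dualCoord S p.2 j : ℝ) * x (some j) : ℝ) : ℂ) := by
    rw [← bilinR_eq_sum_dualCoord, ← bilinC_ofReal]
    simp
  have hzero : bilinC S (fun i => (p.2 i : ℂ)) 0 = 0 := by simp [bilinC]
  simp only [ξ, fourierTerm, hbil, hzero, mul_assoc (f p), ← Complex.exp_add, Fintype.sum_option,
    Option.elim]
  push_cast
  ring_nf

lemma IsJacobiForm.exists_norm_coeff_le (hS : IsEvenPosDef S) {k : ℤ} {t : ℚ} (ht : 0 < t)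
    {χ : SL2Z → ℂ} (hχ : ∀ A, ‖χ A‖ = 1) {ν : (ι → ℤ) → (ι → ℤ) → ℂ} (hν : ∀ x y, ‖ν x y‖ = 1)
    {f : ℚ × (ι → ℚ) → ℂ} {φ : ℂ → (ι → ℂ) → ℂ} (hφ : IsJacobiForm S (k : ℚ) t χ ν f φ) :
    ∃ C : ℝ, ∀ p, 0 ≤ p.1 → ‖f p‖ ≤ C * (1 + (p.1 : ℝ)) ^ k.natAbs := by
  obtain ⟨M, hM⟩ := hφ.exists_norm_ofReal_le hS ht hχ hν
  refine ⟨M * Real.exp (2 * π), fun p hp => ?_⟩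
  have hp' : (0 : ℝ) ≤ p.1 := mod_cast hp
  set v : ℝ := (1 + (p.1 : ℝ))⁻¹ with hv
  have hv0 : 0 < v := by positivity
  have hpv : p.1 * v ≤ 1 := by
    rw [hv, ← div_eq_mul_inv, div_le_one (by positivity)]
    linarith
  have hcoeff := hφ.norm_coeff_mul_exp_le hS hv0 (M := M * (1 + (p.1 : ℝ)) ^ k.natAbs)
    (fun u x => ?_) p
  · calc ‖f p‖ = ‖f p‖ * Real.exp (-(2 * π * (p.1 * v))) * Real.exp (2 * π * (p.1 * v)) := by
          rw [mul_assoc, ← Real.exp_add, neg_add_cancel, Real.exp_zero, mul_one]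
      _ ≤ M * (1 + (p.1 : ℝ)) ^ k.natAbs * Real.exp (2 * π * 1) := by
          gcongr
          exact (by positivity : (0 : ℝ) ≤ ‖f p‖ * Real.exp (-(2 * π * (p.1 * v)))).trans hcoeff
      _ = _ := by ring_nf
  · have him : (u + v * I : ℂ).im = v := by simp
    have hpos : 0 < (u + v * I : ℂ).im := him.symm ▸ hv0
    calc _ ≤ M * (u + v * I : ℂ).im⁻¹ ^ k.natAbs :=
          hM ⟨u + v * I, hpos⟩ (him.trans_le (inv_le_one_of_one_le₀ (by linarith))) x
      _ = _ := by rw [him, hv, inv_inv]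

end CoefficientBound

section Convergence

variable {ι : Type*} [Fintype ι] {S : Matrix ι ι ℤ}

lemma exists_pos_mul_add_le (hS : IsEvenPosDef S) {N v w : ℝ} (hN : 0 ≤ N) (hv : 0 < v)
    (hw : 0 < w) {y : ι → ℝ} (hy : N * bilinR S y y < 2 * v * w) :
    ∃ δ > 0, ∀ (n d : ℝ) (l : ι → ℝ), 0 ≤ n → 0 ≤ d → bilinR S l l ≤ 2 * N * (n * d) →
      δ * (n + d) ≤ n * v + bilinR S l y + d * w := by
  have hY := mul_nonneg hN (bilinR_self_nonneg hS y)
  set s : ℝ := (2 * v * w - N * bilinR S y y) / (2 * (v + w))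
  have hspos : 0 < s := div_pos (by linarith) (by positivity)
  have hse : s * (2 * (v + w)) = 2 * v * w - N * bilinR S y y := div_mul_cancel₀ _ (by positivity)
  have hsv : 0 ≤ v - s := by
    by_contra! hneg
    nlinarith [mul_pos hv hw, mul_pos hv hv]
  have hsw : 0 ≤ w - s := by
    by_contra! hneg
    nlinarith [mul_pos hv hw, mul_pos hw hw]
  -- `s` is chosen so that `(v - s, y, w - s)` still lies in the closed cone.
  have hcone : N * bilinR S y y ≤ 2 * (v - s) * (w - s) := by nlinarith [sq_nonneg s]
  refine ⟨s, hspos, fun n d l hn hd hl => ?_⟩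
  have hsq : bilinR S l y ^ 2 ≤ (n * (v - s) + d * (w - s)) ^ 2 := by
    calc bilinR S l y ^ 2 ≤ bilinR S l l * bilinR S y y := bilinR_sq_le hS l y
      _ ≤ 2 * N * (n * d) * bilinR S y y := by
          gcongr
          exact bilinR_self_nonneg hS y
      _ = 2 * (n * d) * (N * bilinR S y y) := by ring
      _ ≤ 2 * (n * d) * (2 * (v - s) * (w - s)) := by gcongr
      _ ≤ (n * (v - s) + d * (w - s)) ^ 2 := by
          nlinarith [sq_nonneg (n * (v - s) - d * (w - s))]
  have habs := abs_le_of_sq_le_sq' hsq (by positivity)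
  linarith [habs.1]

lemma sum_abs_dualCoord_le (hS : IsEvenPosDef S) {N n d : ℝ} (hN : 0 ≤ N) (hn : 0 ≤ n)
    (hd : 0 ≤ d) {l : ι → ℚ}
    (hl : bilinR S (fun i => (l i : ℝ)) (fun i => (l i : ℝ)) ≤ 2 * N * (n * d)) :
    ∑ i, |(dualCoord S l i : ℝ)| ≤
      (∑ i, √(N * bilinR S (Pi.single i 1) (Pi.single i 1))) * (n + d) := by
  rw [Finset.sum_mul]
  refine Finset.sum_le_sum fun i _ => ?_
  have hcoord : (dualCoord S l i : ℝ) = bilinR S (fun i => (l i : ℝ)) (Pi.single i 1) := by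
    simp [bilinR_eq_sum_dualCoord, Pi.single_apply]
  have hE := bilinR_self_nonneg hS (Pi.single i 1)
  rw [hcoord, ← Real.sqrt_sq (add_nonneg hn hd), ← Real.sqrt_mul (mul_nonneg hN hE)]
  refine Real.abs_le_sqrt ((bilinR_sq_le hS _ _).trans ?_)
  calc _ ≤ 2 * N * (n * d) * bilinR S (Pi.single i 1) (Pi.single i 1) := by gcongr
    _ = N * bilinR S (Pi.single i 1) (Pi.single i 1) * (2 * (n * d)) := by ring
    _ ≤ _ := by
        gcongr
        nlinarith [sq_nonneg n, sq_nonneg d]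

lemma exists_pos_mul_sum_le (hS : IsEvenPosDef S) {N v w : ℝ} (hN : 0 ≤ N) (hv : 0 < v)
    (hw : 0 < w) {y : ι → ℝ} (hy : N * bilinR S y y < 2 * v * w) :
    ∃ c > 0, ∀ (n d : ℝ) (l : ι → ℚ), 0 ≤ n → 0 ≤ d →
      bilinR S (fun i => (l i : ℝ)) (fun i => (l i : ℝ)) ≤ 2 * N * (n * d) →
      c * (n + d + ∑ i, |(dualCoord S l i : ℝ)|) ≤
        n * v + bilinR S (fun i => (l i : ℝ)) y + d * w := by
  obtain ⟨δ, hδ, hle⟩ := exists_pos_mul_add_le hS hN hv hw hy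
  set B : ℝ := ∑ i, √(N * bilinR S (Pi.single i 1) (Pi.single i 1))
  have hB : 0 ≤ B := Finset.sum_nonneg fun _ _ => Real.sqrt_nonneg _
  refine ⟨δ / (1 + B), by positivity, fun n d l hn hd hl => ?_⟩
  calc _ ≤ δ / (1 + B) * (n + d + B * (n + d)) := by
        gcongr
        exact sum_abs_dualCoord_le hS hN hn hd hl
    _ = δ * (n + d) := by field_simp
    _ ≤ _ := hle n d _ hn hd hl

lemma summable_exp_neg_mul_abs_int {c : ℝ} (hc : 0 < c) :
    Summable fun n : ℤ => Real.exp (-(c * |(n : ℝ)|)) := by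
  have h : Summable fun n : ℕ => Real.exp (-(c * |((n : ℤ) : ℝ)|)) := by
    simpa using Real.summable_pow_mul_exp_neg_nat_mul 0 hc
  exact Summable.of_nat_of_neg h (by simpa using h)

lemma summable_pi_prod {ι κ : Type*} [Fintype ι] {g : κ → ℝ} (hg : Summable g)
    (hg₀ : ∀ n, 0 ≤ g n) : Summable fun x : ι → κ => ∏ i, g (x i) := by
  refine summable_of_sum_le (c := ∏ _i : ι, ∑' n, g n)
    (fun x => Finset.prod_nonneg fun i _ => hg₀ _) fun u => ?_
  calc _ ≤ ∑ x ∈ Fintype.piFinset fun i => u.image fun x => x i, ∏ i, g (x i) := by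
        refine Finset.sum_le_sum_of_subset_of_nonneg (fun x hx => ?_)
          fun x _ _ => Finset.prod_nonneg fun i _ => hg₀ _
        exact Fintype.mem_piFinset.2 fun i => Finset.mem_image_of_mem _ hx
    _ = ∏ i, ∑ n ∈ u.image fun x => x i, g n := (Finset.prod_univ_sum _ _).symm
    _ ≤ _ := Finset.prod_le_prod (fun i _ => Finset.sum_nonneg fun _ _ => hg₀ _)
        fun i _ => hg.sum_le_tsum _ fun _ _ => hg₀ _

lemma summable_indicator_inHalfDual_exp (hS : IsEvenPosDef S) {c : ℝ} (hc : 0 < c) :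
    Summable (Set.indicator {l | InHalfDual S l}
      fun l => Real.exp (-(c * ∑ i, |(dualCoord S l i : ℝ)|))) := by
  rw [← summable_subtype_iff_indicator]
  choose m hm using fun l : {l | InHalfDual S l} => l.2.two_mul_dualCoord_eq_intCast
  have hinj : Function.Injective m := fun l l' h => Subtype.ext <| dualCoord_injective hS <|
    funext fun j => mul_left_cancel₀ two_ne_zero ((hm l j).trans (h ▸ (hm l' j).symm))
  refine ((summable_pi_prod (summable_exp_neg_mul_abs_int (half_pos hc))
    fun n => (Real.exp_pos _).le).comp_injective hinj).congr fun l => ?_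
  simp only [Function.comp_apply, ← Real.exp_sum, Finset.mul_sum, ← Finset.sum_neg_distrib]
  refine congrArg _ (Finset.sum_congr rfl fun i _ => ?_)
  have hmi : (m l i : ℝ) = 2 * dualCoord S l i := by exact_mod_cast (hm l i).symm
  rw [hmi, abs_mul, abs_two]
  ring

lemma summable_pnat_pow_mul_exp_neg {c : ℝ} (hc : 0 < c) (K : ℕ) :
    Summable fun n : ℕ+ => (n : ℝ) ^ K * Real.exp (-(c * n)) := by
  simpa [Function.comp_def] using
    (Real.summable_pow_mul_exp_neg_nat_mul K hc).comp_injective PNat.coe_injective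

end Convergence

section LiftSeries

variable {ι : Type*} [Fintype ι] {S : Matrix ι ι ℤ}

/-- The term of index `(a, d, n, l)` of the absolutely convergent series underlying both
expansions of the lifting: grouping by `a * d` gives the Fourier–Jacobi series, grouping by
`(a * n, a • l, a * d)` gives the Fourier series. -/
def liftMonomial (S : Matrix ι ι ℤ) (f : ℚ × (ι → ℚ) → ℂ) (χ : SL2Z → ℂ) (σ : ℕ → SL2Z) (k : ℤ)
    (Q : ℕ) (μ : ℤ) (p : ℂ × (ι → ℂ) × ℂ) (x : ℕ+ × ℕ+ × ℕ+ × (ι → ℚ)) : ℂ :=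
  if ((x.1 * x.2.1 : ℕ+) : ℤ) ≡ μ [ZMOD Q] then
    (x.1 : ℂ) ^ (k - 1) * χ (σ x.1) * f ((x.2.2.1 : ℚ) * x.2.1 / Q, x.2.2.2) *
      𝐞(x.1 * (x.2.2.1 * p.1 / Q + bilinC S (fun i => (x.2.2.2 i : ℂ)) p.2.1 + x.2.1 * p.2.2 / Q))
  else 0

lemma exists_pos_mul_sum_le_of_mem_tubeDom (hS : IsEvenPosDef S) {t : ℚ} (ht : 0 < t) {Q : ℕ}
    (hQ : 0 < Q) {p : ℂ × (ι → ℂ) × ℂ} (hp : p ∈ tubeDom S (Q * t)) :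
    ∃ c > 0, ∀ (a d n : ℕ+) (l : ι → ℚ),
      bilinR S (fun i => (l i : ℝ)) (fun i => (l i : ℝ)) ≤ 2 * ((n : ℝ) * d / Q) * t →
      c * (a + d + n + ∑ i, |(dualCoord S l i : ℝ)|) ≤
        a * (n * p.1.im / Q + bilinR S (fun i => (l i : ℝ)) (fun i => (p.2.1 i).im)
          + d * p.2.2.im / Q) := by
  obtain ⟨hv, hw, hlt⟩ := hp
  obtain ⟨c, hc, hle⟩ := exists_pos_mul_sum_le hS (by positivity) hv hw hlt
  have hQ₁ : (1 : ℝ) ≤ Q := mod_cast hQ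
  refine ⟨c / (2 * Q), by positivity, fun a d n l hl => ?_⟩
  have ha : (1 : ℝ) ≤ a := mod_cast a.2
  have hn : (1 : ℝ) ≤ n := mod_cast n.2
  set X : ℝ := ∑ i, |(dualCoord S l i : ℝ)|
  have hX : 0 ≤ X := Finset.sum_nonneg fun _ _ => abs_nonneg _
  have hprod : (a : ℝ) + d + n + X ≤ 2 * (a * (d + n + X)) := by
    have hd : (0 : ℝ) ≤ d := by positivity
    nlinarith [mul_nonneg (sub_nonneg.2 ha) (by linarith [hd] : 0 ≤ d + n + X - 1)]
  calc c / (2 * Q) * (a + d + n + X) ≤ c / (2 * Q) * (2 * (a * (d + n + X))) := by gcongr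
    _ = a * (c * (n / Q + d / Q + X / Q)) := by field_simp; ring
    _ ≤ a * (c * (n / Q + d / Q + X)) := by
        gcongr
        exact div_le_self hX hQ₁
    _ ≤ a * (n / Q * p.1.im + bilinR S (fun i => (l i : ℝ)) (fun i => (p.2.1 i).im)
          + d / Q * p.2.2.im) := by
        gcongr
        refine hle _ _ _ (by positivity) (by positivity) (hl.trans_eq ?_)
        push_cast
        field_simp
    _ = _ := by ring

lemma norm_natCast_zpow_le (a : ℕ+) (j : ℤ) : ‖(a : ℂ) ^ j‖ ≤ (a : ℝ) ^ j.natAbs := by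
  rw [norm_zpow, Complex.norm_natCast, ← zpow_natCast]
  exact zpow_le_zpow_right₀ (mod_cast a.2) Int.le_natAbs

lemma im_liftExponent (S : Matrix ι ι ℤ) (Q : ℕ) (p : ℂ × (ι → ℂ) × ℂ) (a d n : ℕ)
    (l : ι → ℚ) :
    (a * (n * p.1 / Q + bilinC S (fun i => (l i : ℂ)) p.2.1 + d * p.2.2 / Q) : ℂ).im =
      a * (n * p.1.im / Q + bilinR S (fun i => (l i : ℝ)) (fun i => (p.2.1 i).im)
        + d * p.2.2.im / Q) := by
  simp only [← Complex.ofReal_natCast, Complex.im_ofReal_mul, Complex.add_im,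
    Complex.div_ofReal_im, bilinC_ratCast_im]

lemma IsJacobiForm.exists_norm_liftMonomial_le (hS : IsEvenPosDef S) {k : ℤ} {t : ℚ} (ht : 0 < t)
    {Q : ℕ} (hQ : 0 < Q) {χ : SL2Z → ℂ} (hχ : ∀ A, ‖χ A‖ = 1) {ν : (ι → ℤ) → (ι → ℤ) → ℂ}
    (hν : ∀ x y, ‖ν x y‖ = 1) {f : ℚ × (ι → ℚ) → ℂ} {φ : ℂ → (ι → ℂ) → ℂ}
    (hφ : IsJacobiForm S (k : ℚ) t χ ν f φ) (σ : ℕ → SL2Z) (μ : ℤ) {p : ℂ × (ι → ℂ) × ℂ}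
    (hp : p ∈ tubeDom S (Q * t)) :
    ∃ C, ∃ c > 0, ∀ (a d n : ℕ+) (l : ι → ℚ), ‖liftMonomial S f χ σ k Q μ p (a, d, n, l)‖ ≤
      C * ((a : ℝ) ^ (k - 1).natAbs * Real.exp (-(c * a)) *
        ((d : ℝ) ^ k.natAbs * Real.exp (-(c * d)) *
          ((n : ℝ) ^ k.natAbs * Real.exp (-(c * n)) * Set.indicator {l | InHalfDual S l}
            (fun l => Real.exp (-(c * ∑ i, |(dualCoord S l i : ℝ)|))) l))) := by
  obtain ⟨c, hc, hle⟩ := exists_pos_mul_sum_le_of_mem_tubeDom hS ht hQ hp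
  obtain ⟨C, hC⟩ := hφ.exists_norm_coeff_le hS ht hχ hν
  have hC₀ : 0 ≤ C := by simpa using (norm_nonneg _).trans (hC (0, 0) le_rfl)
  refine ⟨C * 2 ^ k.natAbs, 2 * π * c, by positivity, fun a d n l => ?_⟩
  have hind : 0 ≤ Set.indicator {l | InHalfDual S l}
      (fun l => Real.exp (-(2 * π * c * ∑ i, |(dualCoord S l i : ℝ)|))) l :=
    Set.indicator_nonneg (fun _ _ => (Real.exp_pos _).le) l
  rw [liftMonomial]
  split_ifs
  swap
  · rw [norm_zero]
    positivity
  rcases eq_or_ne (f ((n : ℚ) * d / Q, l)) 0 with hf | hf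
  · rw [hf, mul_zero, zero_mul, norm_zero]
    positivity
  have hcoeff : ‖f ((n : ℚ) * d / Q, l)‖ ≤ C * (2 * (d * n)) ^ k.natAbs := by
    refine (hC _ (hφ.support _ hf).1).trans ?_
    have hdn : (1 : ℝ) ≤ n * d := mod_cast (n * d).2
    have hdiv : (n * d / Q : ℝ) ≤ n * d := div_le_self (by positivity) (mod_cast hQ)
    push_cast
    gcongr
    linarith
  have hl : bilinR S (fun i => (l i : ℝ)) (fun i => (l i : ℝ)) ≤ 2 * ((n : ℝ) * d / Q) * t := by
    simpa using hφ.bilinR_le hf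
  rw [norm_mul, norm_mul, norm_mul, hχ, mul_one, norm_exp_two_pi_I_mul, im_liftExponent,
    Set.indicator_of_mem (show l ∈ {l | InHalfDual S l} from (hφ.support _ hf).2.1)]
  calc _ ≤ (a : ℝ) ^ (k - 1).natAbs * (C * (2 * (d * n)) ^ k.natAbs) *
        Real.exp (-(2 * π * (c * (a + d + n + ∑ i, |(dualCoord S l i : ℝ)|)))) := by
        gcongr ?_ * ?_ * Real.exp (-(2 * π * ?_))
        exacts [norm_natCast_zpow_le a _, hle a d n l hl]
    _ = _ := by
        simp only [mul_add, neg_add, Real.exp_add, mul_pow, ← mul_assoc]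
        ring

lemma IsJacobiForm.summable_liftMonomial (hS : IsEvenPosDef S) {k : ℤ} {t : ℚ} (ht : 0 < t)
    {Q : ℕ} (hQ : 0 < Q) {χ : SL2Z → ℂ} (hχ : ∀ A, ‖χ A‖ = 1) {ν : (ι → ℤ) → (ι → ℤ) → ℂ}
    (hν : ∀ x y, ‖ν x y‖ = 1) {f : ℚ × (ι → ℚ) → ℂ} {φ : ℂ → (ι → ℂ) → ℂ}
    (hφ : IsJacobiForm S (k : ℚ) t χ ν f φ) (σ : ℕ → SL2Z) (μ : ℤ) {p : ℂ × (ι → ℂ) × ℂ}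
    (hp : p ∈ tubeDom S (Q * t)) :
    Summable (liftMonomial S f χ σ k Q μ p) := by
  obtain ⟨C, c, hc, hle⟩ := hφ.exists_norm_liftMonomial_le hS ht hQ hχ hν σ μ hp
  have hpos (K : ℕ) (n : ℕ+) : 0 ≤ (n : ℝ) ^ K * Real.exp (-(c * n)) := by positivity
  have hind (l : ι → ℚ) : 0 ≤ Set.indicator {l | InHalfDual S l}
      (fun l => Real.exp (-(c * ∑ i, |(dualCoord S l i : ℝ)|))) l :=
    Set.indicator_nonneg (fun _ _ => (Real.exp_pos _).le) l
  have hsum := (summable_pnat_pow_mul_exp_neg hc k.natAbs).mul_of_nonneg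
    (summable_indicator_inHalfDual_exp hS hc) (hpos _) hind
  have hsum' := (summable_pnat_pow_mul_exp_neg hc k.natAbs).mul_of_nonneg hsum (hpos _)
    fun x => mul_nonneg (hpos _ _) (hind _)
  refine .of_norm_bounded (((summable_pnat_pow_mul_exp_neg hc (k - 1).natAbs).mul_of_nonneg hsum'
    (hpos _) fun x => mul_nonneg (hpos _ _) (mul_nonneg (hpos _ _) (hind _))).mul_left C) ?_
  rintro ⟨a, d, n, l⟩
  exact hle a d n l

end LiftSeries

section FourierJacobi

lemma sum_range_exp_two_pi_I_mul_div (n : ℤ) {d : ℕ} (hd : d ≠ 0) :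
    ∑ b ∈ Finset.range d, 𝐞((n * b / d : ℂ)) = if (d : ℤ) ∣ n then (d : ℂ) else 0 := by
  have hζ := Complex.isPrimitiveRoot_exp d hd
  have hterm (b : ℕ) : 𝐞((n * b / d : ℂ)) = (Complex.exp (2 * π * I / d) ^ n) ^ b := by
    rw [← Complex.exp_int_mul, ← Complex.exp_nat_mul]
    ring_nf
  simp only [hterm]
  split_ifs with hdn
  · simp [(hζ.zpow_eq_one_iff_dvd n).2 hdn]
  · have hne : Complex.exp (2 * π * I / d) ^ n ≠ 1 := mt (hζ.zpow_eq_one_iff_dvd n).1 hdn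
    rw [geom_sum_eq hne, ← zpow_natCast, zpow_comm, zpow_natCast, hζ.pow_eq_one,
      _root_.one_zpow, sub_self, zero_div]

lemma hasSum_sum_of_injective {α β γ E : Type*} [AddCommMonoid E] [TopologicalSpace E]
    [ContinuousAdd E] [RegularSpace E] {g : β → E} {T : E} (hg : HasSum g T) {e : β → γ × α}
    (he : Function.Injective e) {s : γ → Finset α} {K : γ → α → E}
    (hK : ∀ b, K (e b).1 (e b).2 = g b) (hmem : ∀ b, (e b).2 ∈ s (e b).1)
    (hrange : ∀ c, ∀ a ∈ s c, K c a ≠ 0 → (c, a) ∈ Set.range e) :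
    HasSum (fun c => ∑ a ∈ s c, K c a) T := by
  set F : γ × α → E := fun x => if x.2 ∈ s x.1 then K x.1 x.2 else 0
  have hF : HasSum F T := by
    rw [← he.hasSum_iff]
    · simpa only [Function.comp_def, F, hmem, if_true, hK] using hg
    · rintro ⟨c, a⟩ hca
      by_contra hne
      obtain ⟨ha, hne⟩ : a ∈ s c ∧ K c a ≠ 0 := by simpa [F] using hne
      exact hca (hrange c a ha hne)
  refine hF.prod_fiberwise fun c => ?_
  rw [← Finset.sum_congr rfl fun a (ha : a ∈ s c) => if_pos ha]
  exact hasSum_sum_of_ne_finset_zero fun a ha => if_neg ha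

variable {ι : Type*} [Fintype ι] {S : Matrix ι ι ℤ} {k t : ℚ} {χ : SL2Z → ℂ}
  {ν : (ι → ℤ) → (ι → ℤ) → ℂ} {f : ℚ × (ι → ℚ) → ℂ} {φ : ℂ → (ι → ℂ) → ℂ}

lemma IsJacobiForm.exists_pnat_exponent (hφ : IsJacobiForm S k t χ ν f φ) {Q : ℕ} (hQ : 1 < Q)
    (hgrid : ∀ p, f p ≠ 0 → ∃ n : ℤ, p.1 = (n : ℚ) / Q ∧ n ≡ 1 [ZMOD Q])
    {p : ℚ × (ι → ℚ)} (hp : f p ≠ 0) :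
    ∃ n : ℕ+, p.1 = (n : ℚ) / Q ∧ (n : ℤ) ≡ 1 [ZMOD Q] := by
  obtain ⟨n, hn, hmod⟩ := hgrid p hp
  have hQ₀ : (0 : ℚ) < Q := by positivity
  have hn₀ : 0 ≤ n := by
    have := (hφ.support p hp).1
    rw [hn, le_div_iff₀ hQ₀, zero_mul] at this
    exact_mod_cast this
  have hne : n ≠ 0 := by
    rintro rfl
    have hdvd : (Q : ℤ) ∣ 1 := by simpa using hmod.dvd
    have := Int.le_of_dvd one_pos hdvd
    omega
  lift n to ℕ using hn₀
  exact ⟨⟨n, by omega⟩, by simpa using hn, by simpa using hmod⟩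

lemma sum_fourierTerm_hecke (S : Matrix ι ι ℤ) (f : ℚ × (ι → ℚ) → ℂ) (τ : ℂ) (z : ι → ℂ)
    {Q : ℕ} (hQ : Q ≠ 0) (a : ℂ) {d : ℕ} (hd : d ≠ 0) (n : ℤ) (l : ι → ℚ) :
    ∑ b ∈ Finset.range d,
        fourierTerm S f ((a * τ + b * Q) / d) (fun i => a * z i) ((n : ℚ) / Q, l) =
      if (d : ℤ) ∣ n then d * (f ((n : ℚ) / Q, l) *
        𝐞(a * (n / d * τ / Q + bilinC S (fun i => (l i : ℂ)) z))) else 0 := by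
  have hterm (b : ℕ) :
      fourierTerm S f ((a * τ + b * Q) / d) (fun i => a * z i) ((n : ℚ) / Q, l) =
        f ((n : ℚ) / Q, l) * 𝐞(a * (n / d * τ / Q + bilinC S (fun i => (l i : ℂ)) z)) *
          𝐞((n * b / d : ℂ)) := by
    rw [fourierTerm, mul_assoc (f _), ← Complex.exp_add, bilinC_smul_right]
    push_cast
    congr 2
    field_simp
    ring
  rw [Finset.sum_congr rfl fun b _ => hterm b, ← Finset.mul_sum,
    sum_range_exp_two_pi_I_mul_div n hd, mul_ite, mul_zero, mul_comm (d : ℂ)]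

/-- The average over `b` retains the exponents `n d / Q`. -/
lemma IsJacobiForm.hasSum_hecke_average (hφ : IsJacobiForm S k t χ ν f φ) {Q : ℕ} (hQ : 1 < Q)
    (hgrid : ∀ p, f p ≠ 0 → ∃ n : ℤ, p.1 = (n : ℚ) / Q ∧ n ≡ 1 [ZMOD Q])
    (a d : ℕ+) {τ : ℂ} (hτ : 0 < τ.im) (z : ι → ℂ) :
    HasSum (fun x : ℕ+ × (ι → ℚ) => f ((x.1 : ℚ) * d / Q, x.2) *
        𝐞(a * (x.1 * τ / Q + bilinC S (fun i => (x.2 i : ℂ)) z)))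
      ((d : ℂ)⁻¹ * ∑ b ∈ Finset.range d, φ ((a * τ + b * Q) / (d : ℕ)) fun i => a * z i) := by
  have hQ₀ : Q ≠ 0 := by omega
  have hd : (d : ℂ) ≠ 0 := mod_cast d.ne_zero
  have him (b : ℕ) : 0 < ((a * τ + b * Q) / (d : ℕ) : ℂ).im := by
    rw [← Complex.ofReal_natCast d, Complex.div_ofReal_im]
    simp only [Complex.add_im, Complex.mul_im, Complex.natCast_im, Complex.natCast_re]
    simp only [zero_mul, mul_zero, add_zero]
    positivity
  have hsum := (hasSum_sum (s := Finset.range d) fun b _ =>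
    hφ.hasSum_fourierTerm (him b) fun i => a * z i).mul_left (d : ℂ)⁻¹
  have hinj : Function.Injective fun x : ℕ+ × (ι → ℚ) => ((x.1 : ℚ) * d / Q, x.2) := by
    rintro ⟨n, l⟩ ⟨n', l'⟩ h
    simpa [hQ₀] using h
  rw [← hinj.hasSum_iff] at hsum
  · have hterm (n : ℕ+) (l : ι → ℚ) :
        (d : ℂ)⁻¹ * ∑ b ∈ Finset.range d,
          fourierTerm S f ((a * τ + b * Q) / (d : ℕ)) (fun i => a * z i) ((n : ℚ) * d / Q, l) =
        f ((n : ℚ) * d / Q, l) * 𝐞(a * (n * τ / Q + bilinC S (fun i => (l i : ℂ)) z)) := by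
      have h := sum_fourierTerm_hecke S f τ z hQ₀ a d.ne_zero (n * d : ℕ) l
      rw [if_pos (mod_cast dvd_mul_left _ _)] at h
      push_cast at h
      rw [h, inv_mul_cancel_left₀ hd, mul_div_cancel_right₀ _ hd]
    simpa only [Function.comp_def, hterm] using hsum
  · rintro ⟨r, l⟩ hr
    by_cases hf : f (r, l) = 0
    · simp [fourierTerm, hf]
    obtain ⟨n, rfl, -⟩ := hφ.exists_pnat_exponent hQ hgrid hf
    have hterm := sum_fourierTerm_hecke S f τ z hQ₀ a d.ne_zero n l
    rw [if_neg] at hterm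
    · push_cast at hterm
      rw [hterm, mul_zero]
    · intro hdn
      obtain ⟨m, rfl⟩ := PNat.dvd_iff.2 (mod_cast hdn : (d : ℕ) ∣ n)
      exact hr ⟨(m, l), by push_cast; rw [mul_comm]⟩

end FourierJacobi

section LiftExpansions

variable {ι : Type*} [Fintype ι] {S : Matrix ι ι ℤ} {k : ℤ} {t : ℚ} {χ : SL2Z → ℂ}
  {ν : (ι → ℤ) → (ι → ℤ) → ℂ} {f : ℚ × (ι → ℚ) → ℂ} {φ : ℂ → (ι → ℂ) → ℂ}

/-- The contribution of the divisor `a` of `m` to `liftTerm φ χ σ k Q μ m`. -/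
def liftTermPart (φ : ℂ → (ι → ℂ) → ℂ) (χ : SL2Z → ℂ) (σ : ℕ → SL2Z) (k : ℤ) (Q : ℕ) (μ : ℤ)
    (p : ℂ × (ι → ℂ) × ℂ) (m a : ℕ) : ℂ :=
  if (m : ℤ) ≡ μ [ZMOD Q] then
    (m : ℂ)⁻¹ * (∑ b ∈ Finset.range (m / a), (a : ℂ) ^ k * χ (σ a) *
      φ ((a * p.1 + b * Q) / (m / a : ℕ)) fun i => a * p.2.1 i) * 𝐞((m / Q * p.2.2 : ℂ))
  else 0

lemma sum_divisors_liftTermPart (φ : ℂ → (ι → ℂ) → ℂ) (χ : SL2Z → ℂ) (σ : ℕ → SL2Z) (k : ℤ)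
    (Q : ℕ) (μ : ℤ) (p : ℂ × (ι → ℂ) × ℂ) (m : ℕ) :
    ∑ a ∈ m.divisors, liftTermPart φ χ σ k Q μ p m a = liftTerm φ χ σ k Q μ m p := by
  rcases m.eq_zero_or_pos with rfl | hm
  · simp [liftTerm]
  by_cases hμ : (m : ℤ) ≡ μ [ZMOD Q]
  · simp only [liftTermPart, liftTerm, heckeSum, hμ, Nat.one_le_iff_ne_zero.2 hm.ne', and_self,
      if_true, ← Finset.sum_mul, ← Finset.mul_sum, mul_assoc (2 * (π : ℂ) * I)]
  · simp [liftTermPart, liftTerm, hμ]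

lemma IsJacobiForm.hasSum_liftMonomial_fiber (hφ : IsJacobiForm S (k : ℚ) t χ ν f φ) {Q : ℕ}
    (hQ : 1 < Q) (hgrid : ∀ p, f p ≠ 0 → ∃ n : ℤ, p.1 = (n : ℚ) / Q ∧ n ≡ 1 [ZMOD Q])
    (σ : ℕ → SL2Z) (μ : ℤ) {p : ℂ × (ι → ℂ) × ℂ} (hp : 0 < p.1.im) (a d : ℕ+) :
    HasSum (fun x : ℕ+ × (ι → ℚ) => liftMonomial S f χ σ k Q μ p (a, d, x))
      (liftTermPart φ χ σ k Q μ p (a * d) a) := by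
  by_cases hμ : ((a * d : ℕ) : ℤ) ≡ μ [ZMOD Q]
  swap
  · have hμ' : ¬((a * d : ℕ+) : ℤ) ≡ μ [ZMOD Q] := mod_cast hμ
    simpa only [liftMonomial, liftTermPart, if_neg hμ, if_neg hμ'] using hasSum_zero
  have ha : (a : ℂ) ≠ 0 := mod_cast a.ne_zero
  have hsum := ((hφ.hasSum_hecke_average hQ hgrid a d hp p.2.1).mul_left
    ((a : ℂ) ^ (k - 1) * χ (σ a))).mul_right 𝐞(((a * d : ℕ) / Q * p.2.2 : ℂ))
  have hvalue : liftTermPart φ χ σ k Q μ p (a * d) a = (a : ℂ) ^ (k - 1) * χ (σ a) *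
      ((d : ℂ)⁻¹ * ∑ b ∈ Finset.range d, φ ((a * p.1 + b * Q) / (d : ℕ)) fun i => a * p.2.1 i) *
        𝐞(((a * d : ℕ) / Q * p.2.2 : ℂ)) := by
    rw [liftTermPart, if_pos hμ, Nat.mul_div_cancel_left _ a.pos, ← Finset.mul_sum,
      zpow_sub_one₀ ha]
    push_cast
    ring
  have hterm (n : ℕ+) (l : ι → ℚ) : liftMonomial S f χ σ k Q μ p (a, d, n, l) =
      (a : ℂ) ^ (k - 1) * χ (σ a) * (f ((n : ℚ) * d / Q, l) *
        𝐞(a * (n * p.1 / Q + bilinC S (fun i => (l i : ℂ)) p.2.1))) *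
          𝐞(((a * d : ℕ) / Q * p.2.2 : ℂ)) := by
    have hμ' : ((a * d : ℕ+) : ℤ) ≡ μ [ZMOD Q] := mod_cast hμ
    have hexp : 𝐞(a * (n * p.1 / Q + bilinC S (fun i => (l i : ℂ)) p.2.1 + d * p.2.2 / Q)) =
        𝐞(a * (n * p.1 / Q + bilinC S (fun i => (l i : ℂ)) p.2.1)) *
          𝐞(((a * d : ℕ) / Q * p.2.2 : ℂ)) := by
      rw [← Complex.exp_add]
      push_cast
      ring_nf
    rw [liftMonomial, if_pos hμ', hexp]
    ring
  simpa only [hterm, hvalue] using hsum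

lemma IsJacobiForm.hasSum_liftTerm (hφ : IsJacobiForm S (k : ℚ) t χ ν f φ) {Q : ℕ} (hQ : 1 < Q)
    (hgrid : ∀ p, f p ≠ 0 → ∃ n : ℤ, p.1 = (n : ℚ) / Q ∧ n ≡ 1 [ZMOD Q])
    (σ : ℕ → SL2Z) (μ : ℤ) {p : ℂ × (ι → ℂ) × ℂ} (hp : 0 < p.1.im) {T : ℂ}
    (hT : HasSum (liftMonomial S f χ σ k Q μ p) T) :
    HasSum (fun m => liftTerm φ χ σ k Q μ m p) T := by
  have hpairs : HasSum (fun x : ℕ+ × ℕ+ => liftTermPart φ χ σ k Q μ p (x.1 * x.2) x.1) T :=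
    ((Equiv.prodAssoc ℕ+ ℕ+ _).hasSum_iff.2 hT).prod_fiberwise fun x =>
      hφ.hasSum_liftMonomial_fiber hQ hgrid σ μ hp x.1 x.2
  simp only [← sum_divisors_liftTermPart]
  refine hasSum_sum_of_injective hpairs (e := fun x : ℕ+ × ℕ+ => ((x.1 * x.2 : ℕ), (x.1 : ℕ)))
    (s := Nat.divisors) (K := liftTermPart φ χ σ k Q μ p) ?_ (fun _ => rfl) (fun x => by simp) ?_
  · rintro ⟨a, d⟩ ⟨a', d'⟩ h
    simp only [Prod.mk.injEq, PNat.coe_inj] at h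
    obtain ⟨h, rfl⟩ := h
    simpa using h
  · rintro m a ha -
    obtain ⟨⟨d, rfl⟩, hm⟩ := Nat.mem_divisors.1 ha
    obtain ⟨ha₀, hd₀⟩ := mul_ne_zero_iff.1 hm
    exact ⟨(⟨a, Nat.pos_of_ne_zero ha₀⟩, ⟨d, Nat.pos_of_ne_zero hd₀⟩), rfl⟩

end LiftExpansions

section FourierExpansion

lemma eq_of_mul_eq_one_of_dvd_twentyFour {Q : ℕ} (hQ : Q ∣ 24) {x y : ZMod Q} (hxy : x * y = 1) :
    x = y := by
  have h24 : ∀ z w : ZMod 24, z * w = 1 → z = w := by decide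
  obtain ⟨u, hu⟩ := ZMod.unitsMap_surjective hQ (Units.mkOfMulEqOne x y hxy)
  have hinv : u = u⁻¹ := Units.ext (h24 _ _ u.mul_inv)
  have := congrArg (ZMod.unitsMap hQ) hinv
  rw [map_inv, hu] at this
  exact congrArg Units.val this

variable {ι : Type*}

/-- Units modulo a divisor of `24` are their own inverses, so `n d ≡ 1` forces `n ≡ d`. -/
lemma modEq_of_coeff_ne_zero {f : ℚ × (ι → ℚ) → ℂ} {Q : ℕ} (hQ : Q ∣ 24)
    (hgrid : ∀ p, f p ≠ 0 → ∃ n : ℤ, p.1 = (n : ℚ) / Q ∧ n ≡ 1 [ZMOD Q]) {n d : ℕ} {l : ι → ℚ}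
    (hf : f ((n : ℚ) * d / Q, l) ≠ 0) : (n : ℤ) ≡ d [ZMOD Q] := by
  have hQ₀ : (Q : ℚ) ≠ 0 := mod_cast (Nat.pos_of_dvd_of_pos hQ (by norm_num)).ne'
  obtain ⟨r, hr, hmod⟩ := hgrid _ hf
  have hnd : r = n * d := by
    rw [div_left_inj' hQ₀] at hr
    exact_mod_cast hr.symm
  rw [hnd, ← ZMod.intCast_eq_intCast_iff] at hmod
  rw [← ZMod.intCast_eq_intCast_iff]
  exact eq_of_mul_eq_one_of_dvd_twentyFour hQ (by exact_mod_cast hmod)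

/-- The place of `(a, d, n, l)` in the Fourier expansion of the lifting: its Fourier index
together with the divisor to which it belongs. -/
def liftIndex (x : ℕ+ × ℕ+ × ℕ+ × (ι → ℚ)) : (ℤ × (ι → ℚ) × ℤ) × ℕ :=
  (((x.1 * x.2.2.1 : ℕ), fun i => x.1 * x.2.2.2 i, (x.1 * x.2.1 : ℕ)), x.1)

lemma liftIndex_injective : Function.Injective (liftIndex (ι := ι)) := by
  rintro ⟨a, d, n, l⟩ ⟨a', d', n', l'⟩ h
  simp only [liftIndex, Prod.mk.injEq, PNat.coe_inj] at h
  obtain ⟨⟨hn, hl, hd⟩, rfl⟩ := h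
  have ha : (a : ℚ) ≠ 0 := mod_cast a.ne_zero
  have hl' : l = l' := funext fun i => mul_left_cancel₀ ha (congrFun hl i)
  norm_cast at hn hd
  rw [mul_left_cancel hn, mul_left_cancel hd, hl']

lemma mem_range_liftIndex {q : ℤ × (ι → ℚ) × ℤ} (hn : 0 < q.1) (hm : 0 < q.2.2) {a : ℕ}
    (ha : a ∈ (Int.gcd q.1 q.2.2).divisors) : (q, a) ∈ Set.range (liftIndex (ι := ι)) := by
  obtain ⟨n, l, m⟩ := q
  lift n to ℕ using hn.le
  lift m to ℕ using hm.le
  have ha₀ := Nat.pos_of_mem_divisors ha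
  obtain ⟨⟨n, rfl⟩, ⟨d, rfl⟩⟩ := Nat.dvd_gcd_iff.1 (Nat.dvd_of_mem_divisors ha)
  have hn₀ : 0 < n := Nat.pos_of_ne_zero <| by rintro rfl; simp at hn
  have hd₀ : 0 < d := Nat.pos_of_ne_zero <| by rintro rfl; simp at hm
  refine ⟨(⟨a, ha₀⟩, ⟨d, hd₀⟩, ⟨n, hn₀⟩, fun i => l i / a), ?_⟩
  have ha' : (a : ℚ) ≠ 0 := mod_cast ha₀.ne'
  simp only [liftIndex, PNat.mk_coe, mul_div_cancel₀ _ ha']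

variable [Fintype ι] {S : Matrix ι ι ℤ} {k : ℤ} {t : ℚ} {χ : SL2Z → ℂ}
  {ν : (ι → ℤ) → (ι → ℤ) → ℂ} {f : ℚ × (ι → ℚ) → ℂ} {φ : ℂ → (ι → ℂ) → ℂ}

/-- The contribution of the divisor `a` of `gcd (n, m)` to the Fourier coefficient
`liftCoeff S f χ σ k Q μ (n, l, m)`. -/
def liftCoeffPart (S : Matrix ι ι ℤ) (f : ℚ × (ι → ℚ) → ℂ) (χ : SL2Z → ℂ) (σ : ℕ → SL2Z) (k : ℤ)
    (Q : ℕ) (μ : ℤ) (q : ℤ × (ι → ℚ) × ℤ) (a : ℕ) : ℂ :=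
  if (1 ≤ q.1 ∧ 1 ≤ q.2.2 ∧ q.1 ≡ μ [ZMOD Q] ∧ q.2.2 ≡ μ [ZMOD Q]) ∧
      InHalfDual S fun i => q.2.1 i / a then
    (a : ℂ) ^ (k - 1) * χ (σ a) *
      f ((q.1 * q.2.2 : ℤ) / ((a : ℚ) ^ 2 * Q), fun i => q.2.1 i / a)
  else 0

lemma liftCoeff_eq_sum (S : Matrix ι ι ℤ) (f : ℚ × (ι → ℚ) → ℂ) (χ : SL2Z → ℂ) (σ : ℕ → SL2Z)
    (k : ℤ) (Q : ℕ) (μ : ℤ) (q : ℤ × (ι → ℚ) × ℤ) :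
    liftCoeff S f χ σ k Q μ q =
      ∑ a ∈ (Int.gcd q.1 q.2.2).divisors, liftCoeffPart S f χ σ k Q μ q a := by
  rw [liftCoeff]
  split_ifs with hq
  · simp only [liftCoeffPart, hq, true_and, and_self]
  · simp only [liftCoeffPart, hq, false_and, if_false, Finset.sum_const_zero]

/-- The exponential `exp (2πi (nτ/Q + (l, 𝔷) + mω/Q))` of the Fourier index `q = (n, l, m)` at the
point `p = (τ, 𝔷, ω)`. -/
def liftCharacter (S : Matrix ι ι ℤ) (Q : ℕ) (p : ℂ × (ι → ℂ) × ℂ) (q : ℤ × (ι → ℚ) × ℤ) : ℂ :=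
  𝐞((q.1 * p.1 / Q + bilinC S (fun i => (q.2.1 i : ℂ)) p.2.1 + q.2.2 * p.2.2 / Q : ℂ))

lemma liftCharacter_liftIndex (S : Matrix ι ι ℤ) (Q : ℕ) (p : ℂ × (ι → ℂ) × ℂ) (a d n : ℕ+)
    (l : ι → ℚ) : liftCharacter S Q p (liftIndex (a, d, n, l)).1 =
      𝐞(a * (n * p.1 / Q + bilinC S (fun i => (l i : ℂ)) p.2.1 + d * p.2.2 / Q)) := by
  simp only [liftCharacter, liftIndex, Rat.cast_mul, Rat.cast_natCast, bilinC_smul_left]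
  push_cast
  ring_nf

lemma IsJacobiForm.liftCoeffPart_mul_liftCharacter (hφ : IsJacobiForm S (k : ℚ) t χ ν f φ) {Q : ℕ}
    (hQ : Q ∣ 24) (hgrid : ∀ p, f p ≠ 0 → ∃ n : ℤ, p.1 = (n : ℚ) / Q ∧ n ≡ 1 [ZMOD Q])
    (σ : ℕ → SL2Z) (μ : ℤ) (p : ℂ × (ι → ℂ) × ℂ) (x : ℕ+ × ℕ+ × ℕ+ × (ι → ℚ)) :
    liftCoeffPart S f χ σ k Q μ (liftIndex x).1 (liftIndex x).2 *
      liftCharacter S Q p (liftIndex x).1 = liftMonomial S f χ σ k Q μ p x := by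
  obtain ⟨a, d, n, l⟩ := x
  have ha : (a : ℚ) ≠ 0 := mod_cast a.ne_zero
  have hexponent : ((((a * n : ℕ) : ℤ) * ((a * d : ℕ) : ℤ) : ℤ) : ℚ) / ((a : ℚ) ^ 2 * Q) =
      n * d / Q := by
    push_cast
    field_simp
  rw [liftCharacter_liftIndex]
  simp only [liftIndex, liftCoeffPart, liftMonomial, mul_div_cancel_left₀ _ ha, hexponent]
  by_cases hf : f ((n : ℚ) * d / Q, l) = 0
  · simp only [hf, mul_zero, zero_mul, ite_self]
  have hnd := (modEq_of_coeff_ne_zero hQ hgrid hf).mul_left a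
  have hcond : ((1 ≤ ((a * n : ℕ) : ℤ) ∧ 1 ≤ ((a * d : ℕ) : ℤ) ∧ ((a * n : ℕ) : ℤ) ≡ μ [ZMOD Q] ∧
      ((a * d : ℕ) : ℤ) ≡ μ [ZMOD Q]) ∧ InHalfDual S l) ↔ ((a * d : ℕ+) : ℤ) ≡ μ [ZMOD Q] := by
    refine ⟨fun h => mod_cast h.1.2.2.2, fun h => ⟨⟨?_, ?_, ?_, ?_⟩, (hφ.support _ hf).2.1⟩⟩
    · exact_mod_cast (a * n).2
    · exact_mod_cast (a * d).2
    · exact (mod_cast hnd.trans (mod_cast h) : ((a * n : ℕ) : ℤ) ≡ μ [ZMOD Q])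
    · exact_mod_cast h
  simp only [hcond, ite_mul, zero_mul]

lemma IsJacobiForm.hasSum_liftCoeff (hφ : IsJacobiForm S (k : ℚ) t χ ν f φ) {Q : ℕ} (hQ : Q ∣ 24)
    (hgrid : ∀ p, f p ≠ 0 → ∃ n : ℤ, p.1 = (n : ℚ) / Q ∧ n ≡ 1 [ZMOD Q])
    (σ : ℕ → SL2Z) (μ : ℤ) {p : ℂ × (ι → ℂ) × ℂ} {T : ℂ}
    (hT : HasSum (liftMonomial S f χ σ k Q μ p) T) :
    HasSum (fun q => liftCoeff S f χ σ k Q μ q * liftCharacter S Q p q) T := by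
  simp only [liftCoeff_eq_sum, Finset.sum_mul]
  refine hasSum_sum_of_injective hT liftIndex_injective
    (s := fun q => (Int.gcd q.1 q.2.2).divisors)
    (K := fun q a => liftCoeffPart S f χ σ k Q μ q a * liftCharacter S Q p q)
    (hφ.liftCoeffPart_mul_liftCharacter hQ hgrid σ μ p) ?_ ?_
  · rintro ⟨a, d, n, l⟩
    rw [liftIndex, Int.gcd_natCast_natCast, Nat.mem_divisors]
    exact ⟨Nat.dvd_gcd (dvd_mul_right _ _) (dvd_mul_right _ _), by positivity⟩
  · intro q a ha hne
    obtain ⟨⟨hn, hm, -⟩, -⟩ := of_not_not fun h => hne <| by rw [liftCoeffPart, if_neg h, zero_mul]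
    exact mem_range_liftIndex hn hm ha

lemma IsJacobiForm.nonneg_of_liftCoeff_ne_zero (hφ : IsJacobiForm S (k : ℚ) t χ ν f φ) {Q : ℕ}
    {σ : ℕ → SL2Z} {μ : ℤ} {q : ℤ × (ι → ℚ) × ℤ} (hq : liftCoeff S f χ σ k Q μ q ≠ 0) :
    0 ≤ 2 * (q.1 : ℚ) * (q.2.2 : ℚ) * t / (Q : ℚ) - bilinQ S q.2.1 q.2.1 := by
  rw [liftCoeff_eq_sum] at hq
  obtain ⟨a, ha, hne⟩ := Finset.exists_ne_zero_of_sum_ne_zero hq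
  have hf := right_ne_zero_of_mul (ite_ne_right_iff.1 hne).2
  have ha₀ : (0 : ℚ) < a := mod_cast Nat.pos_of_mem_divisors ha
  have hnonneg := mul_nonneg (sq_nonneg (a : ℚ)) (hφ.support _ hf).2.2
  rw [bilinQ_div_self] at hnonneg
  push_cast at hnonneg
  field_simp at hnonneg ⊢
  exact hnonneg

end FourierExpansion

section Symmetry

variable {ι : Type*} [Fintype ι]

lemma liftCoeff_swap (S : Matrix ι ι ℤ) (f : ℚ × (ι → ℚ) → ℂ) (χ : SL2Z → ℂ) (σ : ℕ → SL2Z)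
    (k : ℤ) (Q : ℕ) (μ n m : ℤ) (l : ι → ℚ) :
    liftCoeff S f χ σ k Q μ (m, l, n) = liftCoeff S f χ σ k Q μ (n, l, m) := by
  have hcond : (1 ≤ m ∧ 1 ≤ n ∧ m ≡ μ [ZMOD Q] ∧ n ≡ μ [ZMOD Q]) ↔
      (1 ≤ n ∧ 1 ≤ m ∧ n ≡ μ [ZMOD Q] ∧ m ≡ μ [ZMOD Q]) := by tauto
  simp only [liftCoeff, Int.gcd_comm m n, mul_comm m n, hcond]

lemma swap_mem_tubeDom {S : Matrix ι ι ℤ} {N : ℚ} {p : ℂ × (ι → ℂ) × ℂ} (hp : p ∈ tubeDom S N) :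
    (p.2.2, p.2.1, p.1) ∈ tubeDom S N :=
  ⟨hp.2.1, hp.1, by simpa only [mul_right_comm] using hp.2.2⟩

lemma hasSum_mul_liftCharacter_swap {S : Matrix ι ι ℤ} {Q : ℕ} {c : ℤ × (ι → ℚ) × ℤ → ℂ}
    (hc : ∀ n l m, c (m, l, n) = c (n, l, m)) {p : ℂ × (ι → ℂ) × ℂ} {T : ℂ}
    (hT : HasSum (fun q => c q * liftCharacter S Q p q) T) :
    HasSum (fun q => c q * liftCharacter S Q (p.2.2, p.2.1, p.1) q) T := by
  let swap : Equiv.Perm (ℤ × (ι → ℚ) × ℤ) :=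
    Function.Involutive.toPerm (fun q => (q.2.2, q.2.1, q.1)) fun _ => rfl
  rw [← swap.hasSum_iff]
  convert hT using 2 with q
  change c (q.2.2, q.2.1, q.1) * liftCharacter S Q (p.2.2, p.2.1, p.1) (q.2.2, q.2.1, q.1) = _
  rw [hc, liftCharacter, liftCharacter]
  ring_nf

end Symmetry

theorem statement9_general {ι : Type*} [Fintype ι] (S : Matrix ι ι ℤ) (hS : IsEvenPosDef S)
    (k : ℤ) (t : ℚ) (ht : 0 < t) (Q : ℕ) (hQ24 : Q ∣ 24) (hQ : 1 < Q)
    (χ : SL2Z → ℂ) (hχ : ∀ A, ‖χ A‖ = 1)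
    (ν : (ι → ℤ) → (ι → ℤ) → ℂ) (hν : ∀ x y, ‖ν x y‖ = 1)
    (f : ℚ × (ι → ℚ) → ℂ) (φ : ℂ → (ι → ℂ) → ℂ) (hφ : IsJacobiForm S (k : ℚ) t χ ν f φ)
    (hgrid : ∀ p, f p ≠ 0 → ∃ n : ℤ, p.1 = (n : ℚ) / (Q : ℚ) ∧ n ≡ 1 [ZMOD (Q : ℤ)])
    (μ : ℤ) (σ : ℕ → SL2Z) :
    (∀ p ∈ tubeDom S ((Q : ℚ) * t),
      HasSum (fun m : ℕ => liftTerm φ χ σ k Q μ m p) (liftFun φ χ σ k Q μ p) ∧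
      HasSum (fun q : ℤ × (ι → ℚ) × ℤ =>
          liftCoeff S f χ σ k Q μ q *
            𝐞((q.1 : ℂ) * p.1 / (Q : ℂ) + bilinC S (fun i => (q.2.1 i : ℂ)) p.2.1
              + (q.2.2 : ℂ) * p.2.2 / (Q : ℂ)))
        (liftFun φ χ σ k Q μ p)) ∧
    (∀ q : ℤ × (ι → ℚ) × ℤ, liftCoeff S f χ σ k Q μ q ≠ 0 →
      0 ≤ 2 * (q.1 : ℚ) * (q.2.2 : ℚ) * t / (Q : ℚ) - bilinQ S q.2.1 q.2.1) ∧
    (∀ p ∈ tubeDom S ((Q : ℚ) * t),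
      liftFun φ χ σ k Q μ (p.2.2, p.2.1, p.1) = liftFun φ χ σ k Q μ p) := by
  have hexpansion (p) (hp : p ∈ tubeDom S ((Q : ℚ) * t)) :
      HasSum (fun m => liftTerm φ χ σ k Q μ m p) (liftFun φ χ σ k Q μ p) ∧
      HasSum (fun q => liftCoeff S f χ σ k Q μ q * liftCharacter S Q p q)
        (liftFun φ χ σ k Q μ p) := by
    have hsum := (hφ.summable_liftMonomial hS ht (by omega) hχ hν σ μ hp).hasSum
    have hterm := hφ.hasSum_liftTerm hQ hgrid σ μ hp.1 hsum
    have hlift : liftFun φ χ σ k Q μ p = _ := hterm.tsum_eq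
    rw [hlift]
    exact ⟨hterm, hφ.hasSum_liftCoeff hQ24 hgrid σ μ hsum⟩
  refine ⟨hexpansion, fun _ => hφ.nonneg_of_liftCoeff_ne_zero, fun p hp => ?_⟩
  exact (hexpansion _ (swap_mem_tubeDom hp)).2.unique
    (hasSum_mul_liftCharacter_swap (fun n l m => liftCoeff_swap S f χ σ k Q μ n m l)
      (hexpansion p hp).2)

/-- On `H(L(Qt))` the lifting `Lift_μ(φ)` is the sum of its Fourier–Jacobi
series and has the stated Fourier expansion, whose coefficients are supported on indices of
nonnegative hyperbolic norm; in particular `Lift_μ(φ)` is symmetric in `τ` and `ω`. -/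
theorem statement9 {ι : Type*} [Fintype ι] (S : Matrix ι ι ℤ) (hS : IsEvenPosDef S)
    (k : ℤ) (t : ℚ) (ht : 0 < t)
    (D : ℕ) (hD2 : Even D) (hD24 : D ∣ 24) (hDpos : 0 < D) (hDlt : D < 24)
    (Q : ℕ) (hQ : Q = 24 / D)
    (vη : SL2Z → ℂ)
    (hvη : ∀ A : SL2Z, ∀ τ : ℂ, 0 < τ.im →
      dedekindEta (((A.1 0 0 : ℂ) * τ + (A.1 0 1 : ℂ))
            / ((A.1 1 0 : ℂ) * τ + (A.1 1 1 : ℂ))) ^ D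
        = vη A * ((A.1 1 0 : ℂ) * τ + (A.1 1 1 : ℂ)) ^ (D / 2) * dedekindEta τ ^ D)
    (ν : (ι → ℤ) → (ι → ℤ) → ℂ) (hν : ∀ x y, HasFiniteOrder (ν x y))
    (hνtriv : Odd Q → ∀ x y, ν x y = 1)
    (f : ℚ × (ι → ℚ) → ℂ) (φ : ℂ → (ι → ℂ) → ℂ)
    (hφ : IsJacobiForm S (k : ℚ) t vη ν f φ)
    -- the Fourier exponents of `φ` lie on the grid `ñ/Q`, `ñ ≡ 1 (mod Q)`:
    (hgrid : ∀ p, f p ≠ 0 → ∃ n' : ℤ, p.1 = (n' : ℚ) / (Q : ℚ) ∧ n' ≡ 1 [ZMOD (Q : ℤ)])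
    (μ : ℤ) (hμ : IsCoprime μ (Q : ℤ))
    (σ : ℕ → SL2Z) (hσ : ∀ a : ℕ, 0 < a → Nat.Coprime a Q → SigmaCond Q a (σ a)) :
    (∀ p ∈ tubeDom S ((Q : ℚ) * t),
      HasSum (fun m : ℕ => liftTerm φ vη σ k Q μ m p) (liftFun φ vη σ k Q μ p) ∧
      HasSum (fun q : ℤ × (ι → ℚ) × ℤ =>
          liftCoeff S f vη σ k Q μ q *
            Complex.exp (2 * (π : ℂ) * I *
              ((q.1 : ℂ) * p.1 / (Q : ℂ)
                + bilinC S (fun i => (q.2.1 i : ℂ)) p.2.1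
                + (q.2.2 : ℂ) * p.2.2 / (Q : ℂ))))
        (liftFun φ vη σ k Q μ p)) ∧
    (∀ q : ℤ × (ι → ℚ) × ℤ, liftCoeff S f vη σ k Q μ q ≠ 0 →
      0 ≤ 2 * (q.1 : ℚ) * (q.2.2 : ℚ) * t / (Q : ℚ) - bilinQ S q.2.1 q.2.1) ∧
    (∀ p ∈ tubeDom S ((Q : ℚ) * t),
      liftFun φ vη σ k Q μ (p.2.2, p.2.1, p.1) = liftFun φ vη σ k Q μ p) := by
  have hQ24 : Q ∣ 24 := hQ ▸ Nat.div_dvd_of_dvd hD24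
  have hQ1 : 1 < Q := hQ ▸ (Nat.lt_div_iff_mul_lt_of_dvd hDpos.ne' hD24).2 (by simpa using hDlt)
  exact statement9_general S hS k t ht Q hQ24 hQ1 vη
    (fun A => (hasFiniteOrder_of_eta_multiplier hD2 hD24 hvη A).norm_eq_one) ν
    (fun x y => (hν x y).norm_eq_one) f φ hφ hgrid μ σ
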